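/- For every subcubic graph G (a finite simple graph of maximum degree at most 3), the injective chromatic index of G satisfies χ'_inj(G) ≤ 7. -/

import Mathlib

open SimpleGraph

/-- Two distinct edges of `G` *conflict* if they are at distance exactly 1 in `G`
(they share no endpoint but some endpoint of one is adjacent to some endpoint of the
other), or they lie in a common triangle of `G`. -/
def EdgeConflict {V : Type*} (G : SimpleGraph V) (e₁ e₂ : Sym2 V) : Prop :=
  e₁ ≠ e₂ ∧
    (((∀ u ∈ e₁, u ∉ e₂) ∧ ∃ u ∈ e₁, ∃ v ∈ e₂, G.Adj u v) ∨
      (∃ a b c : V, G.Adj a b ∧ G.Adj b c ∧ G.Adj a c ∧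
        e₁ ∈ ({s(a, b), s(b, c), s(a, c)} : Set (Sym2 V)) ∧
        e₂ ∈ ({s(a, b), s(b, c), s(a, c)} : Set (Sym2 V))))

/-- An injective edge-coloring of `G` with `k` colors. -/
def IsInjEdgeColoring {V : Type*} (G : SimpleGraph V) {k : ℕ} (f : Sym2 V → Fin k) : Prop :=
  ∀ e₁ ∈ G.edgeSet, ∀ e₂ ∈ G.edgeSet, EdgeConflict G e₁ e₂ → f e₁ ≠ f e₂

/-- The injective chromatic index of `G`. -/
noncomputable def injChromIndex {V : Type*} (G : SimpleGraph V) : ℕ :=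
  sInf {k : ℕ | ∃ f : Sym2 V → Fin k, IsInjEdgeColoring G f}

/-!
Injective edge-colorings of `G` are proper colorings of the graph of conflicts between its edges.
In a minimal counterexample `G` the edges avoiding a set `S` of vertices can be colored, and the few
edges meeting `S` are then colored from the lists of remaining colors; this excludes two triangles
with a common edge, then triangles, then 4-cycles. When `G` has girth at least 5, its conflict graph
has maximum degree at most 8, hence by Lovász's theorem its vertices split into two parts inducing
graphs of maximum degree at most 3 and at most 4. A clique of conflicting edges that is too large
would come from a single rigid configuration which the girth condition rules out, so Brooks'
theorem colors the two parts with 3 and 4 colors.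
-/

/-! ### Brooks' theorem -/

section Brooks

variable {α κ : Type*} {G : SimpleGraph α} {A W : Finset α} {f : α → κ} {u v w y : α} {d : ℕ}

/-- A proper coloring of the subgraph of `G` induced on `A`; the values of `f` outside `A` are
irrelevant, which makes it easy to color one vertex after another. -/
def IsColoringOn (G : SimpleGraph α) (A : Finset α) (f : α → κ) : Prop :=
  ∀ ⦃x⦄, x ∈ A → ∀ ⦃y⦄, y ∈ A → G.Adj x y → f x ≠ f y

namespace IsColoringOn

variable [DecidableEq α]

theorem update (hf : IsColoringOn G A f) (hv : v ∉ A) {c : κ}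
    (hc : ∀ x ∈ A, G.Adj v x → f x ≠ c) :
    IsColoringOn G (insert v A) (Function.update f v c) := by
  have hne : ∀ x ∈ A, x ≠ v := fun x hx => ne_of_mem_of_not_mem hx hv
  intro x hx y hy hxy
  rcases Finset.mem_insert.1 hx with rfl | hxA <;> rcases Finset.mem_insert.1 hy with rfl | hyA
  · exact absurd hxy G.irrefl
  · simpa only [Function.update_self, Function.update_of_ne (hne y hyA)] using (hc y hyA hxy).symm
  · simpa only [Function.update_self, Function.update_of_ne (hne x hxA)] using hc x hxA hxy.symm
  · simpa only [Function.update_of_ne (hne x hxA), Function.update_of_ne (hne y hyA)]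
      using hf hxA hyA hxy

theorem piecewise {B : Finset α} {g : α → κ} (hf : IsColoringOn G A f) (hg : IsColoringOn G B g)
    (h : ∀ x ∈ A, ∀ y ∈ B, ¬G.Adj x y) : IsColoringOn G (A ∪ B) (A.piecewise f g) := by
  have hmem : ∀ {x}, x ∈ A ∪ B → x ∉ A → x ∈ B := by grind
  intro x hx y hy hxy
  by_cases hxA : x ∈ A <;> by_cases hyA : y ∈ A <;>
    simp only [Finset.piecewise, hxA, hyA, if_true, if_false]
  · exact hf hxA hyA hxy
  · exact absurd hxy (h x hxA y (hmem hy hyA))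
  · exact absurd hxy.symm (h y hyA x (hmem hx hxA))
  · exact hg (hmem hx hxA) (hmem hy hyA) hxy

variable [Fintype κ] [Fintype α] [DecidableRel G.Adj]

theorem exists_extend_insert [DecidableEq κ] (hf : IsColoringOn G A f) (hv : v ∉ A)
    (hc : ((G.neighborFinset v ∩ A).image f).card < Fintype.card κ) :
    ∃ g, IsColoringOn G (insert v A) g ∧ Set.EqOn g f A := by
  obtain ⟨c, -, hc⟩ := Finset.exists_mem_notMem_of_card_lt_card (Finset.card_univ (α := κ) ▸ hc)
  refine ⟨_, hf.update hv (c := c) fun x hx hvx hxc => hc (Finset.mem_image.2 ⟨x, ?_, hxc⟩), ?_⟩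
  · simp only [Finset.mem_inter, mem_neighborFinset, hvx, hx, and_self]
  · exact fun x hx => Function.update_of_ne (ne_of_mem_of_not_mem hx hv) _ _

theorem exists_extend_insert_of_adj_notMem (hf : IsColoringOn G A f)
    (hdeg : G.degree v ≤ Fintype.card κ) (hv : v ∉ A) (hvw : G.Adj v w) (hw : w ∉ A) :
    ∃ g, IsColoringOn G (insert v A) g ∧ Set.EqOn g f A := by
  classical
  refine hf.exists_extend_insert hv (Finset.card_image_le.trans_lt (lt_of_lt_of_le ?_ hdeg))
  refine Finset.card_lt_card ⟨Finset.inter_subset_left, fun h => hw ?_⟩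
  exact (Finset.mem_inter.1 (h ((G.mem_neighborFinset v w).2 hvw))).2

theorem exists_extend_insert_of_eq (hf : IsColoringOn G A f)
    (hdeg : G.degree u ≤ Fintype.card κ) (hu : u ∉ A)
    (huy : G.Adj u y) (huw : G.Adj u w) (hyw : y ≠ w) (hfyw : f y = f w) :
    ∃ g, IsColoringOn G (insert u A) g ∧ Set.EqOn g f A := by
  classical
  have himage : (G.neighborFinset u ∩ A).image f ⊆ ((G.neighborFinset u).erase w).image f := by
    intro c hc
    obtain ⟨x, hx, rfl⟩ := Finset.mem_image.1 hc
    by_cases hxw : x = w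
    · exact Finset.mem_image.2 ⟨y, by simp [hyw, huy], by rw [hfyw, hxw]⟩
    · exact Finset.mem_image_of_mem _ (Finset.mem_erase.2 ⟨hxw, (Finset.mem_inter.1 hx).1⟩)
  refine hf.exists_extend_insert hu ?_
  calc _ ≤ _ := Finset.card_le_card himage
    _ ≤ _ := Finset.card_image_le
    _ < G.degree u := Finset.card_erase_lt_of_mem (by simpa using huw)
    _ ≤ _ := hdeg

theorem exists_extend_path (hf : IsColoringOn G A f) (hdeg : ∀ v, G.degree v ≤ Fintype.card κ)
    {l : List α} (hl : l.IsChain G.Adj) (hnd : l.Nodup) (hA : ∀ x ∈ l, x ∉ A)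
    (hlast : ∀ x ∈ l.getLast?, G.Adj x w) (hwA : w ∉ A) (hwl : w ∉ l) :
    ∃ g, IsColoringOn G (A ∪ l.toFinset) g ∧ Set.EqOn g f A := by
  induction l generalizing A f with
  | nil => exact ⟨f, by simpa using hf, fun _ _ => rfl⟩
  | cons v l ih =>
    obtain ⟨u, hvu, huA⟩ : ∃ u, G.Adj v u ∧ u ∉ A := by
      cases l with
      | nil => exact ⟨w, hlast v rfl, hwA⟩
      | cons u l => exact ⟨u, (List.isChain_cons_cons.1 hl).1, hA u (by simp)⟩
    obtain ⟨g, hg, hgf⟩ :=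
      hf.exists_extend_insert_of_adj_notMem (hdeg v) (hA v List.mem_cons_self) hvu huA
    obtain ⟨g', hg', hgg'⟩ := ih hg hl.tail hnd.of_cons (by grind)
      (fun x hx => hlast x (by cases l <;> simp_all)) (by grind) (by grind)
    refine ⟨g', ?_, fun x hx => by rw [hgg' (Finset.mem_insert_of_mem hx), hgf hx]⟩
    simpa only [List.toFinset_cons, Finset.union_insert, Finset.insert_union] using hg'

theorem exists_extend_path_of_eq (hf : IsColoringOn G A f)
    (hdeg : ∀ v, G.degree v ≤ Fintype.card κ)
    {l : List α} (hl : (l ++ [u]).IsChain G.Adj) (hnd : (l ++ [u]).Nodup)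
    (hA : ∀ x ∈ l ++ [u], x ∉ A) (hy : y ∈ A) (hw : w ∈ A)
    (huy : G.Adj u y) (huw : G.Adj u w) (hyw : y ≠ w) (hfyw : f y = f w) :
    ∃ g : α → κ, IsColoringOn G (A ∪ (l ++ [u]).toFinset) g := by
  obtain ⟨hl, -, hlast⟩ := List.isChain_append.1 hl
  obtain ⟨g, hg, hgf⟩ := hf.exists_extend_path hdeg hl hnd.of_append_left (w := u) (by grind)
    (by simpa using hlast) (by grind) (by grind)
  obtain ⟨g', hg', -⟩ := hg.exists_extend_insert_of_eq (hdeg u)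
    (by grind [List.mem_toFinset]) huy huw hyw (by rw [hgf hy, hgf hw, hfyw])
  exact ⟨g', by convert hg' using 1; grind [List.mem_toFinset]⟩

end IsColoringOn

theorem exists_eq_append_cons_forall_not {p : α → Prop} {l : List α} (h : ∃ x ∈ l, p x) :
    ∃ l₁ x l₂, l = l₁ ++ x :: l₂ ∧ p x ∧ ∀ y ∈ l₂, ¬p y := by
  induction l with
  | nil => simp at h
  | cons a l ih =>
    by_cases hl : ∃ x ∈ l, p x
    · obtain ⟨l₁, x, l₂, rfl, hx, hl₂⟩ := ih hl
      exact ⟨a :: l₁, x, l₂, rfl, hx, hl₂⟩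
    · exact ⟨[], a, l, rfl, by grind, by grind⟩

theorem exists_maximal_path_extension {h : α} {t : List α} (hch : (h :: t).IsChain G.Adj)
    (hnd : (h :: t).Nodup) (hW : ∀ x ∈ h :: t, x ∈ W) :
    ∃ h' t', h :: t <:+ h' :: t' ∧ (h' :: t').IsChain G.Adj ∧ (h' :: t').Nodup ∧
      (∀ x ∈ h' :: t', x ∈ W) ∧ ∀ y ∈ W, G.Adj h' y → y ∈ h' :: t' := by
  classical
  by_cases hmax : ∀ y ∈ W, G.Adj h y → y ∈ h :: t
  · exact ⟨h, t, List.suffix_rfl, hch, hnd, hW, hmax⟩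
  · push Not at hmax
    obtain ⟨y, hyW, hhy, hyt⟩ := hmax
    have hnd' : (y :: h :: t).Nodup := hnd.cons hyt
    have hW' : ∀ x ∈ y :: h :: t, x ∈ W := by grind
    have hcard : (y :: h :: t).length ≤ W.card := by
      rw [← List.toFinset_card_of_nodup hnd']
      exact Finset.card_le_card fun x hx => hW' x (List.mem_toFinset.1 hx)
    obtain ⟨h', t', hsuff, H⟩ :=
      exists_maximal_path_extension (List.isChain_cons_cons.2 ⟨hhy.symm, hch⟩) hnd' hW'
    exact ⟨h', t', (List.suffix_cons y _).trans hsuff, H⟩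
termination_by W.card - t.length
decreasing_by simp only [List.length_cons] at hcard ⊢; omega

theorem exists_rotation_cons_append {p : α → Prop} {h : α} {t : List α}
    (hch : (h :: t).IsChain G.Adj) (hlast : ∀ z ∈ (h :: t).getLast?, G.Adj z h) (hh : ¬p h)
    (hex : ∃ x ∈ h :: t, p x) :
    ∃ w l u, (w :: l ++ [u]).Perm (h :: t) ∧ (w :: l ++ [u]).IsChain G.Adj ∧ G.Adj u w ∧
      ¬p w ∧ p u := by
  obtain ⟨l₁, u, l₂, heq, hu, hl₂⟩ := exists_eq_append_cons_forall_not hex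
  obtain ⟨l₁, rfl⟩ : ∃ l₁', l₁ = h :: l₁' := by cases l₁ <;> grind
  rw [heq] at hch hlast ⊢
  obtain ⟨hl₁, hul₂, hlink⟩ := List.isChain_append.1 hch
  have hl₁u : (h :: l₁ ++ [u]).IsChain G.Adj :=
    List.isChain_append.2 ⟨hl₁, .singleton u, by simpa using hlink⟩
  cases l₂ with
  | nil => exact ⟨h, l₁, u, .refl _, hl₁u, hlast u List.getLast?_concat, hh, hu⟩
  | cons w l₂ =>
    refine ⟨w, l₂ ++ h :: l₁, u, ?_, ?_, (List.isChain_cons_cons.1 hul₂).1, hl₂ w (by simp), hu⟩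
    · have hcomm := List.perm_append_comm (l₁ := w :: l₂) (l₂ := h :: l₁ ++ [u])
      simpa only [List.cons_append, List.append_assoc, List.nil_append] using hcomm
    · have hw : ((w :: l₂) ++ (h :: l₁ ++ [u])).IsChain G.Adj :=
        List.isChain_append.2 ⟨hul₂.tail, hl₁u, by simpa [List.getLast?_cons] using hlast⟩
      simpa only [List.cons_append, List.append_assoc] using hw

theorem exists_not_adj_of_cliqueFree {n : ℕ} {s : Finset α} (hG : G.CliqueFree (n + 1))
    (hs : ∀ x ∈ s, G.Adj v x) (hn : n ≤ s.card) : ∃ x ∈ s, ∃ y ∈ s, x ≠ y ∧ ¬G.Adj x y := by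
  classical
  by_contra! hadj
  have hclique : G.IsNClique s.card s := ⟨hadj, rfl⟩
  exact hG.mono (by omega) _ (hclique.insert hs)

variable [Fintype α] [DecidableEq α] [DecidableRel G.Adj] [Fintype κ]

/-- `u` can be colored last on the cycle, since `w` may repeat the color of `y`. -/
theorem exists_coloringOn_union_cycle (hf : IsColoringOn G A f)
    (hdeg : ∀ v, G.degree v ≤ Fintype.card κ) {l : List α}
    (hch : (w :: l ++ [u]).IsChain G.Adj) (hnd : (w :: l ++ [u]).Nodup) (huw : G.Adj u w)
    (hA : ∀ x ∈ w :: l ++ [u], x ∉ A) (hw : ∀ x ∈ A, ¬G.Adj w x) (hy : y ∈ A) (huy : G.Adj u y) :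
    ∃ g : α → κ, IsColoringOn G (A ∪ (w :: l ++ [u]).toFinset) g := by
  have hyw : y ≠ w := by grind
  obtain ⟨g, hg⟩ := (hf.update (v := w) (c := f y) (by grind)
    fun x hx hwx => absurd hwx (hw x hx)).exists_extend_path_of_eq hdeg (List.IsChain.tail hch)
    (List.Nodup.of_cons hnd) (y := y) (w := w) (by grind) (by grind) (by grind) huy huw hyw
    (by rw [Function.update_self, Function.update_of_ne hyw])
  exact ⟨g, by convert hg using 1; grind [List.mem_toFinset]⟩

theorem exists_coloringOn_of_cycle (hdeg : ∀ v, G.degree v ≤ Fintype.card κ)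
    (ih : ∀ B ⊂ W, ∃ g : α → κ, IsColoringOn G B g) {h : α} {t : List α}
    (hch : (h :: t).IsChain G.Adj) (hnd : (h :: t).Nodup)
    (hlast : ∀ z ∈ (h :: t).getLast?, G.Adj z h) (hW : (h :: t).toFinset ⊂ W)
    (hh : ∀ y ∈ W, G.Adj h y → y ∈ h :: t) : ∃ g : α → κ, IsColoringOn G W g := by
  obtain ⟨f, hf⟩ := ih (W \ (h :: t).toFinset)
    (Finset.sdiff_ssubset hW.subset ⟨h, by simp⟩)
  by_cases hex : ∃ u ∈ h :: t, ∃ y ∈ W \ (h :: t).toFinset, G.Adj u y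
  · obtain ⟨w, l, u, hperm, hch, huw, hw, y, hy, huy⟩ :=
      exists_rotation_cons_append hch hlast (by grind [List.mem_toFinset]) hex
    obtain ⟨g, hg⟩ := exists_coloringOn_union_cycle hf hdeg hch (hperm.nodup_iff.2 hnd) huw
      (fun x hx => by grind [hperm.mem_iff, List.mem_toFinset]) (by grind) hy huy
    rw [List.toFinset_eq_of_perm _ _ hperm, Finset.sdiff_union_of_subset hW.subset] at hg
    exact ⟨g, hg⟩
  · obtain ⟨g, hg⟩ := ih _ hW
    have hfg := hg.piecewise hf (by grind [List.mem_toFinset])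
    rw [Finset.union_sdiff_of_subset hW.subset] at hfg
    exact ⟨_, hfg⟩

/-- The common color of `a` and `c` leaves a color for `b`, which is colored last. -/
theorem exists_coloringOn_of_path (hdeg : ∀ v, G.degree v ≤ Fintype.card κ) [Nonempty κ]
    {l₁ l₂ : List α} {a b c z : α} (hch : (l₁ ++ z :: l₂ ++ [c, b, a]).IsChain G.Adj)
    (hnd : (l₁ ++ z :: l₂ ++ [c, b, a]).Nodup) (hac : ¬G.Adj a c) (hbz : G.Adj b z) :
    ∃ g : α → κ, IsColoringOn G (l₁ ++ z :: l₂ ++ [c, b, a]).toFinset g := by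
  obtain ⟨hl, hcba, -⟩ := List.isChain_append.1 hch
  obtain ⟨hl₁, hl₂, hl₁z⟩ := List.isChain_append.1 hl
  have hac' : IsColoringOn G {a, c} fun _ => Classical.arbitrary κ := by
    have hca : ¬G.Adj c a := fun h => hac h.symm
    simp [IsColoringOn, hac, hca]
  have hl₁zb : ((l₁ ++ [z]) ++ [b]).IsChain G.Adj := by
    rw [List.append_assoc, List.isChain_append]
    exact ⟨hl₁, by simpa using hbz.symm, by simpa using hl₁z⟩
  simp only [List.append_assoc, List.nodup_append', List.cons_append, List.nodup_cons,
    List.mem_append, List.mem_cons, List.disjoint_cons_right, List.disjoint_append_right] at hnd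
  obtain ⟨f, hf, hfac⟩ := hac'.exists_extend_path hdeg (l := l₂.reverse) (w := z)
    (by rw [List.isChain_reverse]; exact hl₂.tail.imp fun _ _ h => h.symm)
    (by grind) (by grind)
    (by cases l₂ <;> simp_all [G.adj_comm z]) (by grind) (by grind)
  obtain ⟨g, hg⟩ := hf.exists_extend_path_of_eq hdeg (l := l₁ ++ [z]) (u := b) (y := a) (w := c)
    hl₁zb (by grind) (by grind [List.mem_toFinset, List.Disjoint])
    (by simp) (by simp) (by simp_all [G.adj_comm b]) (by simp_all [G.adj_comm b]) (by grind)
    (by rw [hfac (by simp), hfac (by simp)])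
  exact ⟨g, by convert hg using 1; grind [List.mem_toFinset]⟩

theorem exists_coloringOn_of_maximal_path (hκ : 3 ≤ Fintype.card κ)
    (hdeg : ∀ v, G.degree v ≤ Fintype.card κ)
    (ih : ∀ B ⊂ W, ∃ g : α → κ, IsColoringOn G B g)
    (hlow : ∀ v ∈ W, Fintype.card κ ≤ (G.neighborFinset v ∩ W).card) {h a b c : α} {q t : List α}
    (hac : ¬G.Adj a c) (hq : q ++ [c, b, a] = h :: t) (hch : (h :: t).IsChain G.Adj)
    (hnd : (h :: t).Nodup) (hW : ∀ x ∈ h :: t, x ∈ W)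
    (hmax : ∀ y ∈ W, G.Adj h y → y ∈ h :: t) : ∃ g : α → κ, IsColoringOn G W g := by
  by_cases hpath : (h :: t).toFinset = W
  · have hbW : b ∈ W := hW b (by simp [← hq])
    obtain ⟨z, hz, hzac⟩ := Finset.exists_mem_notMem_of_card_lt_card
      (s := {a, c}) (t := G.neighborFinset b ∩ W) (by grind [Finset.card_le_two])
    simp only [Finset.mem_inter, mem_neighborFinset] at hz
    have hzq : z ∈ q := by grind [List.mem_toFinset, hz.1.ne]
    obtain ⟨l₁, l₂, rfl⟩ := List.append_of_mem hzq
    have : Nonempty κ := Fintype.card_pos_iff.1 (by omega)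
    rw [← hpath, ← hq]
    exact exists_coloringOn_of_path hdeg (hq ▸ hch) (hq ▸ hnd) hac hz.1
  · obtain ⟨y, hy⟩ : (G.neighborFinset h ∩ W).Nonempty :=
      Finset.card_pos.1 (by linarith [hlow h (hW h (by simp))])
    simp only [Finset.mem_inter, mem_neighborFinset] at hy
    obtain ⟨l₁, z, l₂, heq, hhz, hl₂⟩ :=
      exists_eq_append_cons_forall_not ⟨y, hmax y hy.2 hy.1, hy.1⟩
    obtain ⟨l₁, rfl⟩ : ∃ l₁', l₁ = h :: l₁' := by cases l₁ <;> grind [hhz.ne]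
    have hprefix : h :: (l₁ ++ [z]) <+: h :: t := ⟨l₂, by simp [heq]⟩
    refine exists_coloringOn_of_cycle hdeg ih (List.IsChain.prefix hch hprefix)
      (hprefix.sublist.nodup hnd) (by simpa [List.getLast?_cons] using hhz.symm) ?_ (by grind)
    have hsub : (h :: t).toFinset ⊆ W := fun x hx => hW x (List.mem_toFinset.1 hx)
    refine lt_of_le_of_lt (b := (h :: t).toFinset) (fun x hx => ?_) (hsub.ssubset_of_ne hpath)
    exact List.mem_toFinset.2 (hprefix.subset (List.mem_toFinset.1 hx))

omit [DecidableEq α] in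
theorem exists_coloringOn_of_cliqueFree (hκ : 3 ≤ Fintype.card κ)
    (hdeg : ∀ v, G.degree v ≤ Fintype.card κ) (hG : G.CliqueFree (Fintype.card κ + 1))
    (W : Finset α) : ∃ g : α → κ, IsColoringOn G W g := by
  classical
  have : Nonempty κ := Fintype.card_pos_iff.1 (by omega)
  induction W using Finset.strongInduction with | H W ih =>
  obtain rfl | ⟨b, hb⟩ := W.eq_empty_or_nonempty
  · exact ⟨fun _ => Classical.arbitrary κ, by simp [IsColoringOn]⟩
  by_cases hlow : ∃ v ∈ W, (G.neighborFinset v ∩ W).card < Fintype.card κ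
  · obtain ⟨v, hv, hlt⟩ := hlow
    obtain ⟨f, hf⟩ := ih _ (Finset.erase_ssubset hv)
    obtain ⟨g, hg, -⟩ := hf.exists_extend_insert (Finset.notMem_erase v W)
      (Finset.card_image_le.trans_lt (lt_of_le_of_lt (Finset.card_le_card
        (Finset.inter_subset_inter_left (Finset.erase_subset v W))) hlt))
    exact ⟨g, Finset.insert_erase hv ▸ hg⟩
  push Not at hlow
  obtain ⟨a, ha, c, hc, hac, hnac⟩ := exists_not_adj_of_cliqueFree (v := b) hG
    (by simp +contextual) (hlow b hb)
  simp only [Finset.mem_inter, mem_neighborFinset] at ha hc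
  obtain ⟨h, t, ⟨q, hq⟩, hch, hnd, hW, hmax⟩ :=
    exists_maximal_path_extension (G := G) (W := W) (h := c) (t := [b, a])
      (by simp [hc.1.symm, ha.1]) (by simp [hc.1.ne', hac.symm, ha.1.ne]) (by grind)
  exact exists_coloringOn_of_maximal_path hκ hdeg ih hlow hnac hq hch hnd hW hmax

omit [DecidableEq α] in
theorem colorable_of_degree_le_of_cliqueFree (hd : 3 ≤ d) (hdeg : ∀ v, G.degree v ≤ d)
    (hG : G.CliqueFree (d + 1)) : G.Colorable d := by
  obtain ⟨g, hg⟩ := exists_coloringOn_of_cliqueFree (κ := Fin d) (by simpa using hd)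
    (by simpa using hdeg) (by simpa using hG) Finset.univ
  exact ⟨Coloring.mk g fun h => hg (Finset.mem_univ _) (Finset.mem_univ _) h⟩

end Brooks

/-! ### Lovász partitions -/

section Partition

variable {α : Type*} [Fintype α] [DecidableEq α] {G : SimpleGraph α} [DecidableRel G.Adj]

theorem card_interedges_insert_left {A : Finset α} {v : α} (hv : v ∉ A) (B : Finset α) :
    (G.interedges (insert v A) B).card =
      (G.interedges A B).card + (G.neighborFinset v ∩ B).card := by
  have hN : G.neighborFinset v ∩ B = B.filter (G.Adj v) := by
    ext; simp [and_comm]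
  simp only [interedges_def, hN, Finset.card_filter, Finset.sum_product, Finset.sum_insert hv,
    add_comm]

/-- A weighted cut of `G` whose local maxima are the partitions of Lovász. -/
def cutWeight (G : SimpleGraph α) [DecidableRel G.Adj] (a b : ℕ) (S : Finset α) : ℕ :=
  (G.interedges S Sᶜ).card + a * S.card + b * Sᶜ.card

theorem cutWeight_insert (a b : ℕ) {S : Finset α} {v : α} (hv : v ∉ S) :
    cutWeight G a b (insert v S) + ((G.neighborFinset v ∩ S).card + b) =
      cutWeight G a b S + ((G.neighborFinset v \ S).card + a) := by
  have hcompl : Sᶜ = insert v (insert v S)ᶜ := by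
    rw [Finset.compl_insert, Finset.insert_erase (Finset.mem_compl.2 hv)]
  have hnbr : G.neighborFinset v ∩ (insert v S)ᶜ = G.neighborFinset v \ S := by
    rw [← Finset.sdiff_eq_inter_compl, Finset.sdiff_insert_of_notMem (by simp)]
  have hcut := card_interedges_insert_left (G := G) hv (insert v S)ᶜ
  have hcut' := card_interedges_insert_left (G := G) (v := v) (A := (insert v S)ᶜ) (by simp) S
  have : Std.Symm G.Adj := ⟨fun _ _ => Adj.symm⟩
  have hcomm (A B : Finset α) : (G.interedges A B).card = (G.interedges B A).card :=
    Rel.card_interedges_comm A B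
  rw [← hcompl, hcomm, hcomm _ S] at hcut'
  have hcard : Sᶜ.card = (insert v S)ᶜ.card + 1 := by
    rw [hcompl, Finset.card_insert_of_notMem (by simp)]
  rw [cutWeight, cutWeight, hcut, hnbr, hcard, Finset.card_insert_of_notMem hv]
  linarith

theorem exists_lovasz_partition (G : SimpleGraph α) [DecidableRel G.Adj] (a b : ℕ) :
    ∃ S : Finset α,
      (∀ v ∈ S, (G.neighborFinset v ∩ S).card + b ≤ (G.neighborFinset v \ S).card + a) ∧
      ∀ v ∉ S, (G.neighborFinset v \ S).card + a ≤ (G.neighborFinset v ∩ S).card + b := by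
  obtain ⟨S, -, hmax⟩ := Finset.univ.exists_max_image (cutWeight G a b) Finset.univ_nonempty
  refine ⟨S, fun v hv => ?_, fun v hv => ?_⟩
  · have hsdiff : G.neighborFinset v \ S.erase v = G.neighborFinset v \ S := by
      rw [← Finset.sdiff_insert_of_notMem (G.notMem_neighborFinset_self v),
        Finset.insert_erase hv]
    have hmove := cutWeight_insert (G := G) a b (Finset.notMem_erase v S)
    rw [Finset.insert_erase hv, Finset.inter_erase, Finset.erase_eq_of_notMem (by simp),
      hsdiff] at hmove
    linarith [hmax _ (Finset.mem_univ (S.erase v))]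
  · linarith [cutWeight_insert (G := G) a b hv, hmax _ (Finset.mem_univ (insert v S))]

end Partition

theorem colorable_add_of_induce {α : Type*} {G : SimpleGraph α} {S : Set α} {m n : ℕ}
    (hS : (G.induce S).Colorable m) (hSc : (G.induce Sᶜ).Colorable n) : G.Colorable (m + n) := by
  classical
  obtain ⟨f⟩ := hS
  obtain ⟨g⟩ := hSc
  have C : G.Coloring (Fin m ⊕ Fin n) := Coloring.mk
    (fun v => if hv : v ∈ S then .inl (f ⟨v, hv⟩) else .inr (g ⟨v, hv⟩)) fun {v w} hvw => by
      by_cases hv : v ∈ S <;> by_cases hw : w ∈ S <;>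
        simp only [hv, hw, dif_pos, dif_neg, not_false_eq_true, ne_eq, Sum.inl.injEq,
          Sum.inr.injEq, reduceCtorEq]
      · exact f.valid (v := ⟨v, hv⟩) (w := ⟨w, hw⟩) hvw
      · exact g.valid (v := ⟨v, hv⟩) (w := ⟨w, hw⟩) hvw
  simpa using C.colorable

/-! ### List colorings of small graphs -/

section ListColoring

variable {κ : Type*}

theorem exists_mem_ne_ne {L : Finset κ} (hL : 3 ≤ L.card) (p q : κ) :
    ∃ x ∈ L, x ≠ p ∧ x ≠ q := by
  classical
  obtain ⟨x, hx, hne⟩ := Finset.exists_mem_notMem_of_card_lt_card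
    (show ({p, q} : Finset κ).card < L.card from Finset.card_le_two.trans_lt hL)
  exact ⟨x, hx, by simpa using hne⟩

theorem exists_mem_ne_ne_ne {L : Finset κ} (hL : 3 ≤ L.card) (p q r : κ) :
    ∃ x ∈ L, x ≠ p ∧ x ≠ q ∧ (4 ≤ L.card → x ≠ r) := by
  classical
  by_cases h : 4 ≤ L.card
  · obtain ⟨x, hx, hne⟩ := Finset.exists_mem_notMem_of_card_lt_card
      (show ({p, q, r} : Finset κ).card < L.card from Finset.card_le_three.trans_lt h)
    exact ⟨x, hx, by simpa [h] using hne⟩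
  · obtain ⟨x, hx, hp, hq⟩ := exists_mem_ne_ne hL p q
    exact ⟨x, hx, hp, hq, fun h' => absurd h' h⟩

theorem exists_injective_of_lt_card {n : ℕ} {L : Fin n → Finset κ}
    (hL : ∀ i : Fin n, (i : ℕ) < (L i).card) :
    ∃ c : Fin n → κ, (∀ i, c i ∈ L i) ∧ Function.Injective c := by
  classical
  induction n with
  | zero => exact ⟨Fin.elim0, fun i => i.elim0, fun i => i.elim0⟩
  | succ n ih =>
    obtain ⟨c, hc, hinj⟩ := ih (L := fun i => L i.castSucc) fun i => hL i.castSucc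
    obtain ⟨x, hx, hnew⟩ := Finset.exists_mem_notMem_of_card_lt_card
      (s := Finset.univ.image c) (t := L (Fin.last n))
      (by simpa [Finset.card_image_of_injective _ hinj] using hL (Fin.last n))
    refine ⟨Fin.snoc c x, Fin.lastCases (by simpa using hx) (by simpa using hc), ?_⟩
    exact Fin.snoc_injective_iff.2 ⟨hinj, by simpa using hnew⟩

theorem forall_fin_four {p : Fin 4 → Prop} : (∀ i, p i) ↔ p 0 ∧ p 1 ∧ p 2 ∧ p 3 := by
  simp [Fin.forall_fin_succ]

section Prism

/-- The triangular prism with triangles `a`, `b` and rungs `a i`, `b i` can be properly colored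
from the lists `A i` and `B i`. -/
def IsPrismColorable (A B : Fin 3 → Finset κ) : Prop :=
  ∃ a b : Fin 3 → κ, (∀ i, a i ∈ A i ∧ b i ∈ B i ∧ a i ≠ b i) ∧
    ∀ i, a i ≠ a (i + 1) ∧ b i ≠ b (i + 1)

namespace IsPrismColorable

variable {A B : Fin 3 → Finset κ} {x : κ}

theorem of_rotate (k : Fin 3) (h : IsPrismColorable (fun i => A (i + k)) fun i => B (i + k)) :
    IsPrismColorable A B := by
  obtain ⟨a, b, hrung, htri⟩ := h
  refine ⟨fun i => a (i - k), fun i => b (i - k), fun i => ?_, fun i => ?_⟩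
  · simpa only [sub_add_cancel] using hrung (i - k)
  · simpa only [sub_add_eq_add_sub] using htri (i - k)

theorem of_notMem_rung (hA : ∀ i, 3 ≤ (A i).card) (hB : ∀ i, 3 ≤ (B i).card)
    (hx : x ∈ A 0) (hx' : x ∉ B 0) : IsPrismColorable A B := by
  obtain ⟨a₁, ha₁, ha₁x, -⟩ := exists_mem_ne_ne (hA 1) x x
  obtain ⟨a₂, ha₂, ha₂x, ha₂₁⟩ := exists_mem_ne_ne (hA 2) x a₁
  obtain ⟨b₁, hb₁, hb₁a, -⟩ := exists_mem_ne_ne (hB 1) a₁ a₁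
  obtain ⟨b₂, hb₂, hb₂a, hb₂₁⟩ := exists_mem_ne_ne (hB 2) a₂ b₁
  obtain ⟨b₀, hb₀, hb₀₁, hb₀₂⟩ := exists_mem_ne_ne (hB 0) b₁ b₂
  have hxb : x ≠ b₀ := (ne_of_mem_of_not_mem hb₀ hx').symm
  exact ⟨![x, a₁, a₂], ![b₀, b₁, b₂], by simp [Fin.forall_fin_succ, *, Ne.symm],
    by simp [Fin.forall_fin_succ, *, Ne.symm]⟩

theorem of_notMem_side (hA : ∀ i, 3 ≤ (A i).card) (hB : ∀ i, 3 ≤ (B i).card)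
    (hx : x ∈ A 0) (hx' : x ∉ A 1) : IsPrismColorable A B := by
  obtain ⟨b₀, hb₀, hb₀x, -⟩ := exists_mem_ne_ne (hB 0) x x
  obtain ⟨b₂, hb₂, hb₂₀, -⟩ := exists_mem_ne_ne (hB 2) b₀ b₀
  obtain ⟨a₂, ha₂, ha₂x, ha₂b⟩ := exists_mem_ne_ne (hA 2) x b₂
  obtain ⟨b₁, hb₁, hb₁₀, hb₁₂⟩ := exists_mem_ne_ne (hB 1) b₀ b₂
  obtain ⟨a₁, ha₁, ha₁₂, ha₁b⟩ := exists_mem_ne_ne (hA 1) a₂ b₁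
  have hxa : x ≠ a₁ := (ne_of_mem_of_not_mem ha₁ hx').symm
  exact ⟨![x, a₁, a₂], ![b₀, b₁, b₂], by simp [Fin.forall_fin_succ, *, Ne.symm],
    by simp [Fin.forall_fin_succ, *, Ne.symm]⟩

end IsPrismColorable

theorem isPrismColorable_of_three_le_card {A B : Fin 3 → Finset κ} (hA : ∀ i, 3 ≤ (A i).card)
    (hB : ∀ i, 3 ≤ (B i).card) : IsPrismColorable A B := by
  classical
  choose B' hB'B hB' using fun i => Finset.exists_subset_card_eq (hB i)
  suffices IsPrismColorable A B' by
    obtain ⟨a, b, hrung, htri⟩ := this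
    exact ⟨a, b, fun i => ⟨(hrung i).1, hB'B i (hrung i).2.1, (hrung i).2.2⟩, htri⟩
  by_contra hcon
  have hrung (i) : A i = B' i := by
    refine Finset.eq_of_subset_of_card_le (fun x hx => ?_) ((hB' i).trans_le (hA i))
    by_contra hx'
    exact hcon (.of_rotate i (.of_notMem_rung (fun j => hA _) (fun j => (hB' _).ge)
      (by simpa using hx) (by simpa using hx')))
  have hside (i) : A i = A (i + 1) := by
    refine Finset.eq_of_subset_of_card_le (fun x hx => ?_) (by simp only [hrung, hB', le_refl])
    by_contra hx'
    exact hcon (.of_rotate i (.of_notMem_side (fun j => hA _) (fun j => (hB' _).ge)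
      (by simpa using hx) (by simpa [add_comm] using hx')))
  obtain ⟨x, y, z, hxy, hxz, hyz, h⟩ := Finset.card_eq_three.1 (hB' 0)
  have hA0 : A 0 = {x, y, z} := (hrung 0).trans h
  have hAll : ∀ i, A i = {x, y, z} := by
    simpa [Fin.forall_fin_succ, hA0] using ⟨(hside 0).symm.trans hA0, (hside 2).trans hA0⟩
  refine hcon ⟨![x, y, z], ![y, z, x], ?_, ?_⟩ <;>
    simp [Fin.forall_fin_succ, ← hrung, hAll, hxy, hxz, hyz, Ne.symm]

end Prism

section Cycle

variable {L A : Fin 4 → Finset κ} {α : κ}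

/-- `f` colors the pendant edges `f i = c i d i` of a 4-cycle `c` from the lists `L`, the adjacent
pendant edges being in conflict. Two opposite pendant edges have to be separated only when both
their lists have at least four colors: this is what happens when they conflict. -/
def IsPendantColoring (L : Fin 4 → Finset κ) (f : Fin 4 → κ) : Prop :=
  ∀ i, f i ∈ L i ∧ f i ≠ f (i + 1) ∧
    (4 ≤ (L i).card → 4 ≤ (L (i + 2)).card → f i ≠ f (i + 2))

/-- The edges `e i = c i c (i + 1)` and the pendant edges `f i = c i d i` of a 4-cycle `c` can be
colored from the lists `A i` and `L i` in such a way that edges in conflict are separated. -/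
def IsPendantCycleColorable (L A : Fin 4 → Finset κ) : Prop :=
  ∃ f e : Fin 4 → κ, IsPendantColoring L f ∧
    ∀ i, e i ∈ A i ∧ e i ≠ e (i + 2) ∧ e i ≠ f (i + 2) ∧ e i ≠ f (i + 3)

theorem subset_and_notMem_of_forall_mem {A L : Finset κ} (hA : A.card = 3) (hL : 3 ≤ L.card)
    (h : ∀ x ∈ L, (4 ≤ L.card → x ≠ α) → x ∈ A) : A ⊆ L ∧ (4 ≤ L.card → α ∉ A) := by
  classical
  by_cases h4 : 4 ≤ L.card
  · have heq : L.erase α = A := Finset.eq_of_subset_of_card_le (by grind)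
      (by grind [Finset.pred_card_le_card_erase])
    simp [← heq, Finset.erase_subset]
  · have heq : L = A := Finset.eq_of_subset_of_card_le (by grind) (by omega)
    exact ⟨heq.ge, fun h => absurd h h4⟩

theorem exists_ne_avoiding_of_notMem {A B : Finset κ} (hA : 3 ≤ A.card) (hB : 3 ≤ B.card)
    {p q r s : κ} (h : p ∉ A ∨ q ∉ A ∨ r ∉ B ∨ s ∉ B) :
    ∃ x ∈ A, ∃ y ∈ B, x ≠ y ∧ (x ≠ p ∧ x ≠ q) ∧ y ≠ r ∧ y ≠ s := by
  rcases h with h | h | h | h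
  · obtain ⟨y, hy, hyr, hys⟩ := exists_mem_ne_ne hB r s
    obtain ⟨x, hx, hxq, hxy⟩ := exists_mem_ne_ne hA q y
    exact ⟨x, hx, y, hy, hxy, ⟨ne_of_mem_of_not_mem hx h, hxq⟩, hyr, hys⟩
  · obtain ⟨y, hy, hyr, hys⟩ := exists_mem_ne_ne hB r s
    obtain ⟨x, hx, hxp, hxy⟩ := exists_mem_ne_ne hA p y
    exact ⟨x, hx, y, hy, hxy, ⟨hxp, ne_of_mem_of_not_mem hx h⟩, hyr, hys⟩
  · obtain ⟨x, hx, hxp, hxq⟩ := exists_mem_ne_ne hA p q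
    obtain ⟨y, hy, hys, hyx⟩ := exists_mem_ne_ne hB s x
    exact ⟨x, hx, y, hy, hyx.symm, ⟨hxp, hxq⟩, ne_of_mem_of_not_mem hy h, hys⟩
  · obtain ⟨x, hx, hxp, hxq⟩ := exists_mem_ne_ne hA p q
    obtain ⟨y, hy, hyr, hyx⟩ := exists_mem_ne_ne hB r x
    exact ⟨x, hx, y, hy, hyx.symm, ⟨hxp, hxq⟩, hyr, ne_of_mem_of_not_mem hy h⟩

namespace IsPendantCycleColorable

theorem of_rotate (k : Fin 4)
    (h : IsPendantCycleColorable (fun i => L (i + k)) fun i => A (i + k)) :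
    IsPendantCycleColorable L A := by
  obtain ⟨f, e, hf, he⟩ := h
  refine ⟨fun i => f (i - k), fun i => e (i - k), fun i => ?_, fun i => ?_⟩
  · simpa only [sub_add_cancel, sub_add_eq_add_sub] using hf (i - k)
  · simpa only [sub_add_cancel, sub_add_eq_add_sub] using he (i - k)

theorem of_reflect (h : IsPendantCycleColorable ![L 0, L 3, L 2, L 1] ![A 3, A 2, A 1, A 0]) :
    IsPendantCycleColorable L A := by
  obtain ⟨f, e, hf, he⟩ := h
  refine ⟨![f 0, f 3, f 2, f 1], ![e 3, e 2, e 1, e 0], ?_, ?_⟩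
  · simp only [IsPendantColoring, forall_fin_four, Fin.reduceAdd, zero_add, Matrix.cons_val]
      at hf ⊢
    grind
  · simp only [forall_fin_four, Fin.reduceAdd, zero_add, Matrix.cons_val] at he ⊢
    grind

theorem of_pendants (hA : ∀ i, 3 ≤ (A i).card) {f₁ f₂ f₃ : κ}
    (hf : IsPendantColoring L ![α, f₁, f₂, f₃]) (hα : α ∉ A 2)
    (h : ∃ x ∈ A 1, ∃ y ∈ A 3, x ≠ y ∧ (x ≠ f₃ ∧ x ≠ α) ∧ y ≠ f₁ ∧ y ≠ f₂) :
    IsPendantCycleColorable L A := by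
  obtain ⟨x, hx, y, hy, hxy, hx', hy'⟩ := h
  obtain ⟨u, hu, v, hv, huv, hu', hv'⟩ := exists_ne_avoiding_of_notMem (hA 0) (hA 2)
    (p := f₂) (q := f₃) (r := α) (s := f₁) (.inr (.inr (.inl hα)))
  exact ⟨_, ![u, x, v, y], hf, by simp [Fin.forall_fin_succ, *, Ne.symm]⟩

theorem of_pendants_of_notMem (hA : ∀ i, 3 ≤ (A i).card) (hα : α ∈ L 0) (hα2 : α ∉ A 2)
    {f₁ f₂ f₃ : κ} (hf₁ : f₁ ∈ L 1) (hf₂ : f₂ ∈ L 2) (hf₃ : f₃ ∈ L 3) (h₀₁ : f₁ ≠ α)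
    (h₁₂ : f₂ ≠ f₁) (h₂₃ : f₂ ≠ f₃) (h₃₀ : f₃ ≠ α) (h₀₂ : 4 ≤ (L 2).card → f₂ ≠ α)
    (h₁₃ : 4 ≤ (L 1).card → 4 ≤ (L 3).card → f₁ ≠ f₃)
    (h : f₃ ∉ A 1 ∨ α ∉ A 1 ∨ f₁ ∉ A 3 ∨ f₂ ∉ A 3) : IsPendantCycleColorable L A := by
  refine of_pendants hA ?_ hα2 (exists_ne_avoiding_of_notMem (hA 1) (hA 3) h)
  simp only [IsPendantColoring, forall_fin_four, Fin.reduceAdd, zero_add, Matrix.cons_val]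
  grind

theorem of_notMem_of_subset (hL : ∀ i, 3 ≤ (L i).card) (hA : ∀ i, 3 ≤ (A i).card)
    (hα : α ∈ L 0) (hα2 : α ∉ A 2) (hα1 : α ∈ A 1) (hA1 : (A 1).card = 3) (hL3 : L 3 = A 1)
    (hL1 : ∀ x ∈ L 1, x ≠ α → x ∈ A 3) (hA3 : A 3 ⊆ L 2)
    (hαA3 : 4 ≤ (L 2).card → α ∉ A 3) : IsPendantCycleColorable L A := by
  classical
  obtain ⟨f₁, hf₁, hf₁α, -⟩ := exists_mem_ne_ne (hL 1) α α
  obtain ⟨y, hy, y', hy', hyy'⟩ := Finset.one_lt_card.1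
    (show 1 < ((A 3).erase f₁).card by grind [Finset.card_erase_of_mem])
  obtain ⟨x, hx, x', hx', hxx'⟩ := Finset.one_lt_card.1
    (show 1 < ((A 1).erase α).card by grind [Finset.card_erase_of_mem])
  have color : ∀ {x x' y y'}, x ∈ (A 1).erase α → x' ∈ (A 1).erase α → x ≠ x' →
      y ∈ (A 3).erase f₁ → y' ∈ (A 3).erase f₁ → y ≠ y' → x ≠ y → x' ≠ y' →
      IsPendantCycleColorable L A := by
    intro x x' y y' hx hx' hxx' hy hy' hyy' hxy hxy'
    rw [Finset.mem_erase] at hx hx' hy hy'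
    refine of_pendants hA (f₁ := f₁) (f₂ := y) (f₃ := x) ?_ hα2
      ⟨x', hx'.2, y', hy'.2, hxy', ⟨hxx'.symm, hx'.1⟩, hy'.1, hyy'.symm⟩
    have hcard3 : (L 3).card = 3 := by rw [hL3, hA1]
    have hyα : 4 ≤ (L 2).card → y ≠ α := fun h => ne_of_mem_of_not_mem hy.2 (hαA3 h)
    have hyL := hA3 hy.2
    simp only [IsPendantColoring, forall_fin_four, Fin.reduceAdd, zero_add, Matrix.cons_val]
    grind
  by_cases h : x ≠ y ∧ x' ≠ y'
  · exact color hx hx' hxx' hy hy' hyy' h.1 h.2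
  · exact color hx hx' hxx' hy' hy hyy'.symm (by grind) (by grind)

theorem of_notMem (hL : ∀ i, 3 ≤ (L i).card) (hA : ∀ i, (A i).card = 3)
    (hα : α ∈ L 0) (hα2 : α ∉ A 2) : IsPendantCycleColorable L A := by
  have hA' (i) : 3 ≤ (A i).card := (hA i).ge
  by_contra hcon
  have hα1 : α ∈ A 1 := by
    by_contra hα1
    obtain ⟨f₁, hf₁, h₁, -⟩ := exists_mem_ne_ne (hL 1) α α
    obtain ⟨f₃, hf₃, h₃, -, h₃₁⟩ := exists_mem_ne_ne_ne (hL 3) α α f₁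
    obtain ⟨f₂, hf₂, h₂₁, h₂₃, h₂₀⟩ := exists_mem_ne_ne_ne (hL 2) f₁ f₃ α
    exact hcon (of_pendants_of_notMem hA' hα hα2 hf₁ hf₂ hf₃ h₁ h₂₁ h₂₃ h₃ h₂₀
      (fun _ h => (h₃₁ h).symm) (.inr (.inl hα1)))
  have hL3 : L 3 = A 1 := by
    refine Finset.eq_of_subset_of_card_le (fun f₃ hf₃ => ?_) ((hA 1).trans_le (hL 3))
    by_contra h₃'
    have h₃ := (ne_of_mem_of_not_mem hα1 h₃').symm
    obtain ⟨f₁, hf₁, h₁, -, h₁₃⟩ := exists_mem_ne_ne_ne (hL 1) α α f₃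
    obtain ⟨f₂, hf₂, h₂₁, h₂₃, h₂₀⟩ := exists_mem_ne_ne_ne (hL 2) f₁ f₃ α
    exact hcon (of_pendants_of_notMem hA' hα hα2 hf₁ hf₂ hf₃ h₁ h₂₁ h₂₃ h₃ h₂₀
      (fun h _ => h₁₃ h) (.inl h₃'))
  have hL1 : ∀ x ∈ L 1, x ≠ α → x ∈ A 3 := by
    intro f₁ hf₁ h₁
    by_contra h₁'
    obtain ⟨f₃, hf₃, h₃, -, h₃₁⟩ := exists_mem_ne_ne_ne (hL 3) α α f₁
    obtain ⟨f₂, hf₂, h₂₁, h₂₃, h₂₀⟩ := exists_mem_ne_ne_ne (hL 2) f₁ f₃ α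
    exact hcon (of_pendants_of_notMem hA' hα hα2 hf₁ hf₂ hf₃ h₁ h₂₁ h₂₃ h₃ h₂₀
      (fun _ h => (h₃₁ h).symm) (.inr (.inr (.inl h₁'))))
  have hL2 : ∀ x ∈ L 2, (4 ≤ (L 2).card → x ≠ α) → x ∈ A 3 := by
    intro f₂ hf₂ h₂₀
    by_contra h₂'
    obtain ⟨f₁, hf₁, h₁, h₁₂⟩ := exists_mem_ne_ne (hL 1) α f₂
    obtain ⟨f₃, hf₃, h₃, h₃₂, h₃₁⟩ := exists_mem_ne_ne_ne (hL 3) α f₂ f₁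
    exact hcon (of_pendants_of_notMem hA' hα hα2 hf₁ hf₂ hf₃ h₁ h₁₂.symm h₃₂.symm
      h₃ h₂₀ (fun _ h => (h₃₁ h).symm) (.inr (.inr (.inr h₂'))))
  obtain ⟨hA3, hαA3⟩ := subset_and_notMem_of_forall_mem (hA 3) (hL 2) hL2
  exact hcon (of_notMem_of_subset hL hA' hα hα2 hα1 (hA 1) hL3 hL1 hA3 hαA3)

end IsPendantCycleColorable

theorem isPendantCycleColorable_of_three_le_card (hL : ∀ i, 3 ≤ (L i).card)
    (hA : ∀ i, 3 ≤ (A i).card) : IsPendantCycleColorable L A := by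
  classical
  choose B hBA hB using fun i => Finset.exists_subset_card_eq (hA i)
  suffices IsPendantCycleColorable L B by
    obtain ⟨f, e, hf, he⟩ := this
    exact ⟨f, e, hf, fun i => ⟨hBA i (he i).1, (he i).2⟩⟩
  by_contra hcon
  have hopp (i) : L i = B (i + 2) := by
    refine Finset.eq_of_subset_of_card_le (fun x hx => ?_) ((hB _).trans_le (hL i))
    by_contra hx'
    exact hcon (.of_rotate i (.of_notMem (α := x) (fun j => hL _) (fun j => hB _)
      (by simpa using hx) (by simpa [add_comm] using hx')))
  have hnext (i) : L i = B (i + 1) := by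
    refine Finset.eq_of_subset_of_card_le (fun x hx => ?_) ((hB _).trans_le (hL i))
    by_contra hx'
    refine hcon (.of_rotate i (.of_reflect (.of_notMem (α := x) ?_ ?_
      (by simpa using hx) (by simpa [add_comm] using hx')))) <;>
      simp [Fin.forall_fin_succ, hL, hB]
  obtain ⟨x, y, z, hxy, hxz, hyz, h⟩ := Finset.card_eq_three.1 (hB 0)
  have hB' : ∀ i, B i = {x, y, z} := by
    have h1 := (hopp 3).symm.trans (hnext 3)
    have h2 := (hopp 0).symm.trans (hnext 0)
    have h3 := (hopp 1).symm.trans (hnext 1)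
    simp only [Fin.reduceAdd, zero_add] at h1 h2 h3
    simp only [forall_fin_four, h, h1, h2, h3, and_self]
  refine hcon ⟨![x, y, x, z], ![y, y, z, z], ?_, ?_⟩ <;>
    simp [IsPendantColoring, Fin.forall_fin_succ, hopp, hB', hxy, hxz, hyz, Ne.symm]

end Cycle
end ListColoring

/-! ### Conflict graphs -/

section Conflict

variable {V : Type*} {G : SimpleGraph V} {a b c d : V} {e e₁ e₂ : Sym2 V}

theorem EdgeConflict.symm (h : EdgeConflict G e₁ e₂) : EdgeConflict G e₂ e₁ := by
  obtain ⟨hne, ⟨hdisj, u, hu, v, hv, huv⟩ | ⟨a, b, c, hab, hbc, hac, h₁, h₂⟩⟩ := h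
  · exact ⟨hne.symm, .inl ⟨fun w h₂ h₁ => hdisj w h₁ h₂, v, hv, u, hu, huv.symm⟩⟩
  · exact ⟨hne.symm, .inr ⟨a, b, c, hab, hbc, hac, h₂, h₁⟩⟩

/-- The graph of conflicts between edges of `G`, whose proper colorings are the injective
edge-colorings of `G`. It lives on all of `Sym2 V`; the non-edges of `G` are isolated. -/
def conflictGraph (G : SimpleGraph V) : SimpleGraph (Sym2 V) where
  Adj e₁ e₂ := e₁ ∈ G.edgeSet ∧ e₂ ∈ G.edgeSet ∧ EdgeConflict G e₁ e₂
  symm := ⟨fun _ _ h => ⟨h.2.1, h.1, h.2.2.symm⟩⟩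
  loopless := ⟨fun _ h => h.2.2.1 rfl⟩

theorem injChromIndex_le_of_colorable_conflictGraph {k : ℕ} (h : (conflictGraph G).Colorable k) :
    injChromIndex G ≤ k := by
  obtain ⟨f⟩ := h
  exact Nat.sInf_le ⟨f, fun e₁ h₁ e₂ h₂ h => f.valid ⟨h₁, h₂, h⟩⟩

theorem conflictGraph_adj_of_adj (hab : G.Adj a b) (hcd : G.Adj c d) (hac : G.Adj a c)
    (had : a ≠ d) (hbc : b ≠ c) (hbd : b ≠ d) : (conflictGraph G).Adj s(a, b) s(c, d) := by
  have hac' := hac.ne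
  refine ⟨hab, hcd, ?_, .inl ⟨?_, a, by simp, c, by simp, hac⟩⟩
  · grind
  · simp only [Sym2.mem_iff]
    grind

theorem EdgeConflict.exists_eq (h : EdgeConflict G e₁ e₂) :
    (∃ u v x y, e₁ = s(u, v) ∧ e₂ = s(x, y) ∧ G.Adj u x ∧ u ≠ y ∧ v ≠ x ∧ v ≠ y) ∨
      ∃ u v w, e₁ = s(u, v) ∧ e₂ = s(u, w) ∧ G.Adj u v ∧ G.Adj u w ∧ G.Adj v w := by
  obtain ⟨hne, ⟨hdisj, u, ⟨v, rfl⟩, x, ⟨y, rfl⟩, hux⟩ | ⟨a, b, c, hab, hbc, hac, h₁, h₂⟩⟩ := h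
  · simp only [Sym2.mem_iff, not_or, forall_eq_or_imp, forall_eq] at hdisj
    exact .inl ⟨u, v, x, y, rfl, rfl, hux, hdisj.1.2, hdisj.2.1, hdisj.2.2⟩
  · have hba := hab.symm
    have hcb := hbc.symm
    have hca := hac.symm
    right
    rcases h₁ with rfl | rfl | rfl <;> rcases h₂ with rfl | rfl | rfl <;>
      first
      | exact absurd rfl hne
      | exact ⟨a, _, _, rfl, rfl, by assumption, by assumption, by assumption⟩
      | exact ⟨b, _, _, Sym2.eq_swap, rfl, by assumption, by assumption, by assumption⟩
      | exact ⟨b, _, _, rfl, Sym2.eq_swap, by assumption, by assumption, by assumption⟩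
      | exact ⟨c, _, _, Sym2.eq_swap, Sym2.eq_swap, by assumption, by assumption, by assumption⟩

theorem exists_eq_of_conflictGraph_adj (h : (conflictGraph G).Adj s(a, b) e) :
    ∃ x y, e = s(x, y) ∧ G.Adj x y ∧ (G.Adj a x ∧ b ≠ x ∧ a ≠ y ∨ G.Adj b x ∧ a ≠ x ∧ b ≠ y) := by
  obtain ⟨-, he, h⟩ := h
  obtain ⟨u, v, x, y, huv, rfl, hux, huy, hvx, hvy⟩ | ⟨u, v, w, h', rfl, huv, huw, hvw⟩ :=
    h.exists_eq
  · exact ⟨x, y, rfl, he, by grind⟩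
  · refine ⟨w, u, Sym2.eq_swap, huw.symm, ?_⟩
    have := huv.ne
    have := huv.ne'
    have := hvw.ne
    have := huw.ne
    rcases Sym2.eq_iff.1 h' with ⟨rfl, rfl⟩ | ⟨rfl, rfl⟩ <;> simp [*]

theorem adj_of_conflictGraph_adj_of_mem (h : (conflictGraph G).Adj s(a, b) s(a, c)) :
    G.Adj b c := by
  obtain ⟨u, v, x, y, h₁, h₂, hux, huy, hvx, hvy⟩ | ⟨u, v, w, h₁, h₂, huv, huw, hvw⟩ :=
    h.2.2.exists_eq
  · have := hux.ne
    rcases Sym2.eq_iff.1 h₁ with ⟨rfl, rfl⟩ | ⟨rfl, rfl⟩ <;>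
      rcases Sym2.eq_iff.1 h₂ with ⟨_, _⟩ | ⟨_, _⟩ <;> contradiction
  · have := hvw.symm
    have := huv.ne
    have := huw.ne
    rcases Sym2.eq_iff.1 h₁ with ⟨rfl, rfl⟩ | ⟨rfl, rfl⟩ <;>
      rcases Sym2.eq_iff.1 h₂ with ⟨h, h'⟩ | ⟨h, h'⟩ <;> simp_all

section TriangleFree

variable (hT : G.CliqueFree 3)
include hT

theorem not_adj_of_cliqueFree_three (hab : G.Adj a b) (hbc : G.Adj b c) : ¬G.Adj a c :=
  fun hac => isIndepSet_neighborSet_of_triangleFree _ hT b hab.symm hbc hac.ne hac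

theorem conflictGraph_adj_iff_of_cliqueFree_three :
    (conflictGraph G).Adj s(a, b) s(c, d) ↔ G.Adj a b ∧ G.Adj c d ∧ a ≠ c ∧ a ≠ d ∧ b ≠ c ∧
      b ≠ d ∧ (G.Adj a c ∨ G.Adj a d ∨ G.Adj b c ∨ G.Adj b d) := by
  refine ⟨fun h => ⟨h.1, h.2.1, ?_⟩, ?_⟩
  · obtain ⟨u, v, x, y, _, _, hux, huy, hvx, hvy⟩ | ⟨u, v, w, -, -, huv, huw, hvw⟩ :=
      h.2.2.exists_eq
    · grind [hux.ne]
    · exact absurd huw (not_adj_of_cliqueFree_three hT huv hvw)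
  · rintro ⟨hab, hcd, hac, had, hbc, hbd, h | h | h | h⟩
    · exact conflictGraph_adj_of_adj hab hcd h had hbc hbd
    · rw [Sym2.eq_swap (a := c)]
      exact conflictGraph_adj_of_adj hab hcd.symm h hac hbd hbc
    · rw [Sym2.eq_swap (a := a)]
      exact conflictGraph_adj_of_adj hab.symm hcd h hbd hac had
    · rw [Sym2.eq_swap (a := a), Sym2.eq_swap (a := c)]
      exact conflictGraph_adj_of_adj hab.symm hcd.symm h hbc had hac

end TriangleFree

theorem not_adj_of_cycleGraph_four_free (hC : (cycleGraph 4).Free G) (hac : a ≠ c) (hbd : b ≠ d)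
    (hab : G.Adj a b) (hbc : G.Adj b c) (hcd : G.Adj c d) : ¬G.Adj a d := by
  have hcycle : ∀ i j, (cycleGraph 4).Adj i j → j = i + 1 ∨ i = j + 1 := by decide
  intro had
  have hadj (i : Fin 4) : G.Adj (![a, b, c, d] i) (![a, b, c, d] (i + 1)) := by
    fin_cases i
    exacts [hab, hbc, hcd, had.symm]
  refine hC ⟨⟨⟨![a, b, c, d], fun {i j} hij => ?_⟩, ?_⟩⟩
  · rcases hcycle i j hij with rfl | rfl
    exacts [hadj i, (hadj j).symm]
  · intro i j hij
    have := hab.ne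
    have := hbc.ne
    have := hcd.ne
    have := had.ne
    fin_cases i <;> fin_cases j <;> simp_all

section HangingEdges

variable [Fintype V] [DecidableEq V] [DecidableRel G.Adj] {S : Finset V}

/-- The edges `s(x, y)` avoiding `S` such that `b`, `a`, `x`, `y` is a walk along which `b ≠ x` and
`a ≠ y`; an edge in conflict with `s(a, b)` and avoiding `S` hangs on `a` or on `b` in this way. -/
def hangingEdges (G : SimpleGraph V) [DecidableRel G.Adj] (S : Finset V) (a b : V) :
    Finset (Sym2 V) :=
  (G.neighborFinset a \ insert b S).biUnion fun x =>
    (G.neighborFinset x \ insert a S).image fun y => s(x, y)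

theorem card_hangingEdges_le {n : ℕ}
    (hn : ∀ x ∈ G.neighborFinset a \ insert b S, (G.neighborFinset x \ insert a S).card ≤ n) :
    (hangingEdges G S a b).card ≤ (G.neighborFinset a \ insert b S).card * n :=
  Finset.card_biUnion_le_card_mul _ _ _ fun x hx => Finset.card_image_le.trans (hn x hx)

theorem neighborFinset_conflictGraph_inter_subset [DecidableRel (conflictGraph G).Adj] (a b : V) :
    (conflictGraph G).neighborFinset s(a, b) ∩ Sᶜ.sym2 ⊆
      hangingEdges G S a b ∪ hangingEdges G S b a := by
  intro e he
  obtain ⟨hadj, hS⟩ := Finset.mem_inter.1 he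
  obtain ⟨x, y, rfl, hxy, h⟩ := exists_eq_of_conflictGraph_adj ((mem_neighborFinset ..).1 hadj)
  simp only [Finset.mem_sym2_iff, Sym2.mem_iff, forall_eq_or_imp, forall_eq,
    Finset.mem_compl] at hS
  simp only [hangingEdges, Finset.mem_union, Finset.mem_biUnion, Finset.mem_image]
  rcases h with ⟨hax, hbx, hay⟩ | ⟨hbx, hax, hby⟩
  · exact .inl ⟨x, by simp [hax, hbx.symm, hS], y, by simp [hxy, hay.symm, hS], rfl⟩
  · exact .inr ⟨x, by simp [hbx, hax.symm, hS], y, by simp [hxy, hby.symm, hS], rfl⟩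

theorem card_neighborFinset_sdiff_add_card_le {T : Finset V} (hTa : ∀ x ∈ T, G.Adj a x)
    (hTS : T ⊆ S) : (G.neighborFinset a \ S).card + T.card ≤ G.degree a := by
  rw [← card_neighborFinset_eq_degree, ← Finset.card_sdiff_add_card_inter (G.neighborFinset a) S]
  have : T ⊆ G.neighborFinset a ∩ S := fun x hx => by simp [hTa x hx, hTS hx]
  grw [this]

theorem card_neighborFinset_sdiff_insert_lt (hab : G.Adj a b) :
    (G.neighborFinset a \ insert b S).card < G.degree a := by
  simpa using
    card_neighborFinset_sdiff_add_card_le (S := insert b S) (T := {b}) (by simpa) (by simp)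

variable (hG : ∀ v, G.degree v ≤ 3)
include hG

theorem card_hangingEdges_le_two_mul (S : Finset V) (a b : V) :
    (hangingEdges G S a b).card ≤ 2 * (G.neighborFinset a \ insert b S).card := by
  rw [mul_comm]
  refine card_hangingEdges_le fun x hx => ?_
  have hax : G.Adj a x := by simpa using (Finset.mem_sdiff.1 hx).1
  have := card_neighborFinset_sdiff_insert_lt (S := S) hax.symm
  have := hG x
  lia

variable [DecidableRel (conflictGraph G).Adj]

omit [DecidableEq V] in
theorem degree_conflictGraph_le (hab : G.Adj a b) :
    (conflictGraph G).degree s(a, b) + 4 ≤ 2 * (G.degree a + G.degree b) := by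
  classical
  have hunion := (Finset.card_le_card
    (neighborFinset_conflictGraph_inter_subset (G := G) (S := ∅) a b)).trans
      (Finset.card_union_le _ _)
  rw [Finset.compl_empty, Finset.sym2_univ, Finset.inter_univ,
    card_neighborFinset_eq_degree] at hunion
  have := card_hangingEdges_le_two_mul hG ∅ a b
  have := card_hangingEdges_le_two_mul hG ∅ b a
  have := card_neighborFinset_sdiff_insert_lt (S := ∅) hab
  have := card_neighborFinset_sdiff_insert_lt (S := ∅) hab.symm
  lia

omit [DecidableEq V] in
theorem degree_conflictGraph_le_eight (e : Sym2 V) : (conflictGraph G).degree e ≤ 8 := by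
  induction e with | _ a b
  by_cases hab : G.Adj a b
  · have := degree_conflictGraph_le hG hab
    have := hG a
    have := hG b
    lia
  · have : (conflictGraph G).degree s(a, b) = 0 := by
      rw [degree_eq_zero]
      exact fun e he => hab he.1
    lia

end HangingEdges

end Conflict

/-! ### Conflict graphs of subcubic graphs of girth at least five -/

theorem notMem_of_isNClique_of_adj {α : Type*} [Fintype α] [DecidableEq α] {H : SimpleGraph α}
    [DecidableRel H.Adj] {P Q : Finset α} {d : ℕ} {q q' v : α} (hQ : H.IsNClique (d + 1) Q)
    (hQP : Q ⊆ P) (hP : ∀ u ∈ P, (H.neighborFinset u ∩ P).card ≤ d) (hq : q ∈ Q) (hqv : H.Adj q v)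
    (hq' : q' ∈ Q) (hne : q' ≠ v) (hnadj : ¬H.Adj q' v) : v ∉ P := by
  intro hv
  have hvQ : v ∉ Q := fun hvQ => hnadj (hQ.isClique hq' hvQ hne)
  have hsub : insert v (Q.erase q) ⊆ H.neighborFinset q ∩ P := by
    intro u hu
    rcases Finset.mem_insert.1 hu with rfl | hu
    · simp [hqv, hv]
    · obtain ⟨huq, huQ⟩ := Finset.mem_erase.1 hu
      simp [hQ.isClique hq huQ huq.symm, hQP huQ]
  have hcard := (Finset.card_le_card hsub).trans (hP q (hQP hq))
  rw [Finset.card_insert_of_notMem (by simp [hvQ]), Finset.card_erase_of_mem hq, hQ.card_eq]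
    at hcard
  lia

theorem colorable_induce_of_cliqueFreeOn {α : Type*} [Fintype α] [DecidableEq α]
    {H : SimpleGraph α} [DecidableRel H.Adj] {P : Finset α} {d : ℕ} (hd : 3 ≤ d)
    (hP : ∀ v ∈ P, (H.neighborFinset v ∩ P).card ≤ d) (hH : H.CliqueFreeOn P (d + 1)) :
    (H.induce (P : Set α)).Colorable d := by
  refine colorable_of_degree_le_of_cliqueFree hd (fun v => ?_) ((cliqueFree_induce_iff ..).2 hH)
  have hcard := congrArg Finset.card (map_neighborFinset_induce (G := H) v)
  rw [Finset.card_map, card_neighborFinset_eq_degree, Finset.toFinset_coe] at hcard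
  exact (le_of_eq (by convert hcard)).trans (hP v v.2)

section GirthFive

variable {V : Type*} {G : SimpleGraph V} {a b a₁ c a₂ d b₁ e : V} {Q : Set (Sym2 V)}

/-- The configuration formed by four pairwise conflicting edges `s(a, b)`, `s(a₁, c)`, `s(a₂, d)`,
`s(b₁, e)` of a subcubic graph of girth at least five: eight distinct vertices with six further
adjacencies. The edges are recorded as members of `Q`, a clique of the conflict graph. -/
structure IsConflictConfig (G : SimpleGraph V) (Q : Set (Sym2 V)) (a b a₁ c a₂ d b₁ e : V) :
    Prop where
  nodup : [a, b, a₁, c, a₂, d, b₁, e].Nodup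
  ab_mem : s(a, b) ∈ Q
  a₁c_mem : s(a₁, c) ∈ Q
  a₂d_mem : s(a₂, d) ∈ Q
  b₁e_mem : s(b₁, e) ∈ Q
  ab : G.Adj a b
  a₁c : G.Adj a₁ c
  a₂d : G.Adj a₂ d
  b₁e : G.Adj b₁ e
  aa₁ : G.Adj a a₁
  aa₂ : G.Adj a a₂
  bb₁ : G.Adj b b₁
  cd : G.Adj c d
  a₁e : G.Adj a₁ e
  db₁ : G.Adj d b₁

variable (hT : G.CliqueFree 3) (hC : (cycleGraph 4).Free G)
include hT hC

theorem isConflictConfig_or_of_nodup (hnodup : [a, b, a₁, c, a₂, d, b₁, e].Nodup)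
    (hab : s(a, b) ∈ Q) (ha₁c : s(a₁, c) ∈ Q) (ha₂d : s(a₂, d) ∈ Q) (hb₁e : s(b₁, e) ∈ Q)
    (ab : G.Adj a b) (a₁c : G.Adj a₁ c) (a₂d : G.Adj a₂ d) (b₁e : G.Adj b₁ e)
    (aa₁ : G.Adj a a₁) (aa₂ : G.Adj a a₂) (bb₁ : G.Adj b b₁)
    (h₂₃ : G.Adj a₁ a₂ ∨ G.Adj a₁ d ∨ G.Adj c a₂ ∨ G.Adj c d)
    (h₂₄ : G.Adj a₁ b₁ ∨ G.Adj a₁ e ∨ G.Adj c b₁ ∨ G.Adj c e)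
    (h₃₄ : G.Adj a₂ b₁ ∨ G.Adj a₂ e ∨ G.Adj d b₁ ∨ G.Adj d e) :
    IsConflictConfig G Q a b a₁ c a₂ d b₁ e ∨ IsConflictConfig G Q a b a₂ d a₁ c b₁ e := by
  have hswap : [a, b, a₂, d, a₁, c, b₁, e].Nodup :=
    hnodup.perm <| .cons _ <| .cons _ <|
      (List.perm_append_comm (l₁ := [a₁, c]) (l₂ := [a₂, d])).append_right _
  have tri {x y z : V} (hxy : G.Adj x y) (hyz : G.Adj y z) (hxz : G.Adj x z) : False :=
    not_adj_of_cliqueFree_three hT hxy hyz hxz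
  have quad {x y z w : V} (hxy : G.Adj x y) (hyz : G.Adj y z) (hzw : G.Adj z w)
      (hxw : G.Adj x w) (hxz : x ≠ z := by grind only) (hyw : y ≠ w := by grind only) : False :=
    not_adj_of_cycleGraph_four_free hC hxz hyw hxy hyz hzw hxw
  have hne := hnodup
  simp only [List.nodup_cons, List.mem_cons, List.not_mem_nil, or_false, not_or] at hne
  have cd : G.Adj c d := by
    rcases h₂₃ with h | h | h | h
    · exact (tri aa₁.symm aa₂ h).elim
    · exact (quad aa₁ h a₂d.symm aa₂).elim
    · exact (quad aa₁ a₁c h aa₂).elim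
    · exact h
  have ha₁b₁ : ¬G.Adj a₁ b₁ := fun h => quad aa₁ h bb₁.symm ab
  have ha₂b₁ : ¬G.Adj a₂ b₁ := fun h => quad aa₂ h bb₁.symm ab
  have hends : G.Adj a₁ e ∧ G.Adj d b₁ ∨ G.Adj a₂ e ∧ G.Adj c b₁ := by
    rcases h₂₄.resolve_left ha₁b₁ with h | h | h <;>
      rcases h₃₄.resolve_left ha₂b₁ with h' | h' | h'
    · exact (quad aa₁ h h'.symm aa₂).elim
    · exact .inl ⟨h, h'⟩
    · exact (quad h h'.symm cd.symm a₁c).elim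
    · exact .inr ⟨h', h⟩
    · exact (tri h h'.symm cd).elim
    · exact (quad h b₁e h'.symm cd).elim
    · exact (quad h' h.symm cd a₂d).elim
    · exact (quad h b₁e.symm h'.symm cd).elim
    · exact (tri h h'.symm cd).elim
  refine hends.imp (fun ⟨h, h'⟩ => ?_) fun ⟨h, h'⟩ => ?_
  · constructor <;> assumption
  · have := cd.symm
    constructor <;> assumption

theorem exists_isConflictConfig_of_adj (hQ : (conflictGraph G).IsClique Q) (hab : s(a, b) ∈ Q)
    (ha₁c : s(a₁, c) ∈ Q) (ha₂d : s(a₂, d) ∈ Q) (hb₁e : s(b₁, e) ∈ Q)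
    (hne : [s(a, b), s(a₁, c), s(a₂, d), s(b₁, e)].Nodup)
    (aa₁ : G.Adj a a₁) (aa₂ : G.Adj a a₂) (bb₁ : G.Adj b b₁) :
    ∃ a b a₁ c a₂ d b₁ e, IsConflictConfig G Q a b a₁ c a₂ d b₁ e := by
  have hadj {p q r s : V} (h : s(p, q) ∈ Q) (h' : s(r, s) ∈ Q) (hne : s(p, q) ≠ s(r, s)) :=
    (conflictGraph_adj_iff_of_cliqueFree_three hT).1 (hQ h h' hne)
  simp only [List.nodup_cons, List.mem_cons, List.not_mem_nil, or_false, not_or] at hne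
  obtain ⟨⟨h₁₂, h₁₃, h₁₄⟩, ⟨h₂₃, h₂₄⟩, h₃₄, -⟩ := hne
  have h₁₂ := hadj hab ha₁c h₁₂
  have h₁₃ := hadj hab ha₂d h₁₃
  have h₁₄ := hadj hab hb₁e h₁₄
  have h₂₃ := hadj ha₁c ha₂d h₂₃
  have h₂₄ := hadj ha₁c hb₁e h₂₄
  have h₃₄ := hadj ha₂d hb₁e h₃₄
  have hnodup : [a, b, a₁, c, a₂, d, b₁, e].Nodup := by
    simp [h₁₂.1.ne, h₂₃.1.ne, h₃₄.1.ne, h₃₄.2.1.ne, *]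
  rcases isConflictConfig_or_of_nodup hT hC hnodup hab ha₁c ha₂d hb₁e h₁₂.1 h₁₂.2.1 h₃₄.1 h₃₄.2.1
    aa₁ aa₂ bb₁ h₂₃.2.2.2.2.2.2 h₂₄.2.2.2.2.2.2 h₃₄.2.2.2.2.2.2 with h | h
  · exact ⟨a, b, a₁, c, a₂, d, b₁, e, h⟩
  · exact ⟨a, b, a₂, d, a₁, c, b₁, e, h⟩

section

variable [Fintype V] [DecidableRel G.Adj] (hG : ∀ v, G.degree v ≤ 3)
include hG

omit hC in
theorem false_of_isClique_of_adj (hQ : (conflictGraph G).IsClique Q) {x y z x' y' z' : V}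
    (hab : s(a, b) ∈ Q) (hx : s(x, x') ∈ Q) (hy : s(y, y') ∈ Q) (hz : s(z, z') ∈ Q)
    (hne : [s(a, b), s(x, x'), s(y, y'), s(z, z')].Nodup)
    (ax : G.Adj a x) (ay : G.Adj a y) (az : G.Adj a z) : False := by
  classical
  have hadj {p q r s : V} (h : s(p, q) ∈ Q) (h' : s(r, s) ∈ Q) (hne : s(p, q) ≠ s(r, s)) :=
    (conflictGraph_adj_iff_of_cliqueFree_three hT).1 (hQ h h' hne)
  simp only [List.nodup_cons, List.mem_cons, List.not_mem_nil, or_false, not_or] at hne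
  obtain ⟨⟨hax, hay, haz⟩, ⟨hxy, hxz⟩, hyz, -⟩ := hne
  have hax := hadj hab hx hax
  have hay := hadj hab hy hay
  have haz := hadj hab hz haz
  have hxy := hadj hx hy hxy
  have hxz := hadj hx hz hxz
  have hyz := hadj hy hz hyz
  have hcard : ({b, x, y, z} : Finset V).card = 4 := by
    simp [*]
  have hsub : ({b, x, y, z} : Finset V) ⊆ G.neighborFinset a := by
    simp [Finset.insert_subset_iff, *]
  have := Finset.card_le_card hsub
  have := hG a
  rw [card_neighborFinset_eq_degree] at *
  lia

theorem exists_isConflictConfig {Q : Finset (Sym2 V)} (hQ : (conflictGraph G).IsClique Q)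
    (hcard : 3 < Q.card) : ∃ a b a₁ c a₂ d b₁ e, IsConflictConfig G Q a b a₁ c a₂ d b₁ e := by
  classical
  obtain ⟨q, hq⟩ := Finset.card_pos.1 (by lia : 0 < Q.card)
  induction q with | _ a b
  obtain ⟨q₂, h₂, q₃, h₃, q₄, h₄, h₂₃, h₂₄, h₃₄⟩ : ∃ q₂ ∈ Q.erase s(a, b), ∃ q₃ ∈ Q.erase s(a, b),
      ∃ q₄ ∈ Q.erase s(a, b), q₂ ≠ q₃ ∧ q₂ ≠ q₄ ∧ q₃ ≠ q₄ := by
    refine Finset.two_lt_card.1 ?_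
    rw [Finset.card_erase_of_mem hq]
    lia
  have hside {q : Sym2 V} (h : q ∈ Q.erase s(a, b)) :
      ∃ x y, q = s(x, y) ∧ (G.Adj a x ∨ G.Adj b x) := by
    obtain ⟨hne, hqQ⟩ := Finset.mem_erase.1 h
    obtain ⟨x, y, rfl, -, hxy⟩ := exists_eq_of_conflictGraph_adj (hQ hq hqQ hne.symm)
    exact ⟨x, y, rfl, hxy.imp And.left And.left⟩
  obtain ⟨x₂, y₂, rfl, s₂⟩ := hside h₂
  obtain ⟨x₃, y₃, rfl, s₃⟩ := hside h₃
  obtain ⟨x₄, y₄, rfl, s₄⟩ := hside h₄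
  have hq' : s(b, a) ∈ Q := by rwa [Sym2.eq_swap]
  have hne {p r : V} {q q' q'' : Sym2 V} (hpr : s(p, r) = s(a, b))
      (h : q ∈ Q.erase s(a, b)) (h' : q' ∈ Q.erase s(a, b)) (h'' : q'' ∈ Q.erase s(a, b))
      (hqq' : q ≠ q') (hqq'' : q ≠ q'') (hq'q'' : q' ≠ q'') : [s(p, r), q, q', q''].Nodup := by
    have := (Finset.ne_of_mem_erase h).symm
    have := (Finset.ne_of_mem_erase h').symm
    have := (Finset.ne_of_mem_erase h'').symm
    simp [*]
  have m₂ := Finset.mem_of_mem_erase h₂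
  have m₃ := Finset.mem_of_mem_erase h₃
  have m₄ := Finset.mem_of_mem_erase h₄
  rcases s₂ with s₂ | s₂ <;> rcases s₃ with s₃ | s₃ <;> rcases s₄ with s₄ | s₄
  · exact (false_of_isClique_of_adj hT hG hQ hq m₂ m₃ m₄
      (hne rfl h₂ h₃ h₄ h₂₃ h₂₄ h₃₄) s₂ s₃ s₄).elim
  · exact exists_isConflictConfig_of_adj hT hC hQ hq m₂ m₃ m₄
      (hne rfl h₂ h₃ h₄ h₂₃ h₂₄ h₃₄) s₂ s₃ s₄
  · exact exists_isConflictConfig_of_adj hT hC hQ hq m₂ m₄ m₃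
      (hne rfl h₂ h₄ h₃ h₂₄ h₂₃ h₃₄.symm) s₂ s₄ s₃
  · exact exists_isConflictConfig_of_adj hT hC hQ hq' m₃ m₄ m₂
      (hne Sym2.eq_swap h₃ h₄ h₂ h₃₄ h₂₃.symm h₂₄.symm) s₃ s₄ s₂
  · exact exists_isConflictConfig_of_adj hT hC hQ hq m₃ m₄ m₂
      (hne rfl h₃ h₄ h₂ h₃₄ h₂₃.symm h₂₄.symm) s₃ s₄ s₂
  · exact exists_isConflictConfig_of_adj hT hC hQ hq' m₂ m₄ m₃
      (hne Sym2.eq_swap h₂ h₄ h₃ h₂₄ h₂₃ h₃₄.symm) s₂ s₄ s₃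
  · exact exists_isConflictConfig_of_adj hT hC hQ hq' m₂ m₃ m₄
      (hne Sym2.eq_swap h₂ h₃ h₄ h₂₃ h₂₄ h₃₄) s₂ s₃ s₄
  · exact (false_of_isClique_of_adj hT hG hQ hq' m₂ m₃ m₄
      (hne Sym2.eq_swap h₂ h₃ h₄ h₂₃ h₂₄ h₃₄) s₂ s₃ s₄).elim

end

variable [Fintype V] [DecidableEq V] [DecidableRel (conflictGraph G).Adj] {P Q : Finset (Sym2 V)}
  {x y z : V} {n : ℕ}

omit [Fintype V] [DecidableEq V] [DecidableRel (conflictGraph G).Adj] in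
theorem IsConflictConfig.ne_of_adj (h : IsConflictConfig G (Q : Set (Sym2 V)) a b a₁ c a₂ d b₁ e)
    (bx : G.Adj b x) (cz : G.Adj c z) (a₂y : G.Adj a₂ y) :
    (x ≠ a₁ ∧ x ≠ e ∧ x ≠ c) ∧ (z ≠ a ∧ z ≠ a₂ ∧ z ≠ b) ∧ y ≠ b ∧ y ≠ a₁ ∧ y ≠ c := by
  have hnodup := h.nodup
  simp only [List.nodup_cons, List.mem_cons, List.not_mem_nil, or_false, not_or] at hnodup
  have tri {u v w : V} (huv : G.Adj u v) (hvw : G.Adj v w) : ¬G.Adj u w :=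
    not_adj_of_cliqueFree_three hT huv hvw
  have hbc : ¬G.Adj b c := by
    refine not_adj_of_cycleGraph_four_free hC ?_ ?_ h.ab.symm h.aa₁ h.a₁c <;> grind only
  refine ⟨⟨?_, ?_, ?_⟩, ⟨?_, ?_, ?_⟩, ?_, ?_, ?_⟩ <;> rintro rfl
  exacts [tri h.ab bx h.aa₁, tri h.bb₁ h.b₁e bx, hbc bx, tri h.aa₁ h.a₁c cz.symm,
    tri cz h.a₂d h.cd, hbc cz.symm, tri h.aa₂ a₂y h.ab, tri h.aa₂ a₂y h.aa₁, tri a₂y h.cd h.a₂d]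

omit hC in
theorem notMem_of_adj_of_shared_vertex {p q u v w : V}
    (hQ : (conflictGraph G).IsNClique (n + 1) Q) (hQP : Q ⊆ P)
    (hP : ∀ q ∈ P, ((conflictGraph G).neighborFinset q ∩ P).card ≤ n)
    (hpq : s(p, q) ∈ Q) (huv : s(u, v) ∈ Q) (hpq' : G.Adj p q) (hvw : G.Adj v w) (hpv : G.Adj p v)
    (hne : u ≠ w ∧ p ≠ w ∧ q ≠ v ∧ q ≠ w) : s(v, w) ∉ P := by
  refine notMem_of_isNClique_of_adj hQ hQP hP hpq
    (conflictGraph_adj_of_adj hpq' hvw hpv hne.2.1 hne.2.2.1 hne.2.2.2) huv ?_ ?_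
  · simp [hne.1, hvw.ne]
  · simp [conflictGraph_adj_iff_of_cliqueFree_three hT]

theorem IsConflictConfig.five_le_card_sdiff (h : IsConflictConfig G Q a b a₁ c a₂ d b₁ e)
    (hQ : (conflictGraph G).IsNClique (n + 1) Q) (hQP : Q ⊆ P)
    (hP : ∀ q ∈ P, ((conflictGraph G).neighborFinset q ∩ P).card ≤ n)
    (bx : G.Adj b x) (hxa : x ≠ a) (hxb₁ : x ≠ b₁) (cz : G.Adj c z) (hza₁ : z ≠ a₁) (hzd : z ≠ d)
    (a₂y : G.Adj a₂ y) (hya : y ≠ a) (hyd : y ≠ d) :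
    s(a, a₁) ∉ P ∧ 5 ≤ ((conflictGraph G).neighborFinset s(a, a₁) \ P).card := by
  obtain ⟨hx, hz, hy⟩ := h.ne_of_adj hT hC bx cz a₂y
  obtain ⟨hnodup, hab, ha₁c, ha₂d, hb₁e, ab, a₁c, a₂d, b₁e, aa₁, aa₂, bb₁, cd, -, db₁⟩ := h
  simp only [List.nodup_cons, List.mem_cons, List.not_mem_nil, or_false, not_or] at hnodup
  have exit {p q u v w : V} := notMem_of_adj_of_shared_vertex (p := p) (q := q) (u := u) (v := v)
    (w := w) hT hQ hQP hP
  refine ⟨exit ha₂d (Sym2.eq_swap ▸ hab) a₂d aa₁ aa₂.symm (by grind only), ?_⟩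
  let F : Finset (Sym2 V) := {s(b₁, b), s(b, x), s(d, c), s(c, z), s(a₂, y)}
  have conflict {v w : V} (hvw : G.Adj v w) (h : G.Adj a v ∨ G.Adj a w ∨ G.Adj a₁ v ∨ G.Adj a₁ w)
      (hne : a ≠ v ∧ a ≠ w ∧ a₁ ≠ v ∧ a₁ ≠ w) : (conflictGraph G).Adj s(a, a₁) s(v, w) :=
    (conflictGraph_adj_iff_of_cliqueFree_three hT).2
      ⟨aa₁, hvw, hne.1, hne.2.1, hne.2.2.1, hne.2.2.2, h⟩
  have hF : F.card = 5 := by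
    rw [Finset.card_insert_of_notMem, Finset.card_insert_of_notMem, Finset.card_insert_of_notMem,
      Finset.card_pair] <;>
    simp only [Finset.mem_insert, Finset.mem_singleton, Sym2.eq_iff, ne_eq, not_or, not_and]
    all_goals grind only
  rw [← hF]
  refine Finset.card_le_card fun f hf => ?_
  simp only [F, Finset.mem_insert, Finset.mem_singleton] at hf
  simp only [Finset.mem_sdiff, mem_neighborFinset]
  rcases hf with rfl | rfl | rfl | rfl | rfl
  · exact ⟨conflict bb₁.symm (by simp [ab]) (by grind only),
      exit (Sym2.eq_swap ▸ ha₂d) (Sym2.eq_swap ▸ hb₁e) a₂d.symm bb₁.symm db₁ (by grind only)⟩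
  · exact ⟨conflict bx (by simp [ab]) (by grind only),
      exit hb₁e hab b₁e bx bb₁.symm (by grind only)⟩
  · exact ⟨conflict cd.symm (by simp [a₁c]) (by grind only),
      exit hb₁e ha₂d b₁e cd.symm db₁.symm (by grind only)⟩
  · exact ⟨conflict cz (by simp [a₁c]) (by grind only),
      exit (Sym2.eq_swap ▸ ha₂d) ha₁c a₂d.symm cz cd.symm (by grind only)⟩
  · exact ⟨conflict a₂y (by simp [aa₂]) (by grind only),
      exit hab (Sym2.eq_swap ▸ ha₂d) ab a₂y aa₂ (by grind only)⟩

variable [DecidableRel G.Adj] (hG : ∀ v, G.degree v ≤ 3)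
include hG

theorem cliqueFreeOn_conflictGraph (hn : 3 ≤ n)
    (hP : ∀ q ∈ P, ((conflictGraph G).neighborFinset q ∩ P).card ≤ n)
    (hdeg : ∀ q ∈ P, n ≤ ((conflictGraph G).neighborFinset q ∩ P).card →
      7 ≤ (conflictGraph G).degree q)
    (hout : ∀ q ∉ P, ((conflictGraph G).neighborFinset q \ P).card ≤ 4) :
    (conflictGraph G).CliqueFreeOn P (n + 1) := by
  intro Q hQP hQ
  have hQP : Q ⊆ P := by exact_mod_cast hQP
  obtain ⟨a, b, a₁, c, a₂, d, b₁, e, h⟩ :=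
    exists_isConflictConfig hT hC hG hQ.isClique (by rw [hQ.card_eq]; lia)
  have three_le {u v : V} (huv : s(u, v) ∈ Q) (hadj : G.Adj u v) :
      3 ≤ G.degree u ∧ 3 ≤ G.degree v := by
    have hsub : Q.erase s(u, v) ⊆ (conflictGraph G).neighborFinset s(u, v) ∩ P := fun q hq => by
      obtain ⟨hne, hq⟩ := Finset.mem_erase.1 hq
      simp [hQ.isClique huv hq hne.symm, hQP hq]
    have hcard := Finset.card_le_card hsub
    rw [Finset.card_erase_of_mem huv, hQ.card_eq, Nat.add_sub_cancel] at hcard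
    have := hdeg _ (hQP huv) hcard
    have := degree_conflictGraph_le hG hadj
    have := hG u
    have := hG v
    lia
  obtain ⟨x, bx, hxa, hxb₁⟩ := exists_mem_ne_ne (three_le h.ab_mem h.ab).2 a b₁
  obtain ⟨z, cz, hza₁, hzd⟩ := exists_mem_ne_ne (three_le h.a₁c_mem h.a₁c).2 a₁ d
  obtain ⟨y, a₂y, hya, hyd⟩ := exists_mem_ne_ne (three_le h.a₂d_mem h.a₂d).1 a d
  rw [mem_neighborFinset] at bx cz a₂y
  obtain ⟨hE, hcard⟩ :=
    h.five_le_card_sdiff hT hC hQ hQP hP bx hxa hxb₁ cz hza₁ hzd a₂y hya hyd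
  have := hout _ hE
  lia

omit [DecidableEq V] [DecidableRel (conflictGraph G).Adj] in
theorem colorable_conflictGraph_of_cliqueFree_three_of_cycleGraph_four_free :
    (conflictGraph G).Colorable 7 := by
  classical
  obtain ⟨S, hS, hSc⟩ := exists_lovasz_partition (conflictGraph G) 3 4
  have hsum (q : Sym2 V) : ((conflictGraph G).neighborFinset q ∩ S).card +
      ((conflictGraph G).neighborFinset q \ S).card = (conflictGraph G).degree q := by
    rw [Finset.card_inter_add_card_sdiff, card_neighborFinset_eq_degree]
  have h8 := degree_conflictGraph_le_eight hG
  have hsdiff (q : Sym2 V) : (conflictGraph G).neighborFinset q \ Sᶜ =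
      (conflictGraph G).neighborFinset q ∩ S := by
    rw [sdiff_compl, Finset.inf_eq_inter]
  have hinter (q : Sym2 V) : (conflictGraph G).neighborFinset q ∩ Sᶜ =
      (conflictGraph G).neighborFinset q \ S := by
    rw [Finset.sdiff_eq_inter_compl]
  have hS₃ : ((conflictGraph G).induce (S : Set (Sym2 V))).Colorable 3 := by
    refine colorable_induce_of_cliqueFreeOn le_rfl ?_
      (cliqueFreeOn_conflictGraph hT hC hG le_rfl ?_ ?_ ?_) <;>
      grind only
  have hS₄ : ((conflictGraph G).induce ((Sᶜ : Finset (Sym2 V)) : Set (Sym2 V))).Colorable 4 := by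
    refine colorable_induce_of_cliqueFreeOn (by simp) ?_
      (cliqueFreeOn_conflictGraph hT hC hG (by simp) ?_ ?_ ?_) <;>
      simp only [hsdiff, hinter, Finset.mem_compl, not_not] <;> grind only
  rw [Finset.coe_compl] at hS₄
  exact colorable_add_of_induce hS₃ hS₄

end GirthFive

/-! ### Reducible configurations -/

section AvailableColors

variable {α κ ι : Type*} [Fintype α] [DecidableEq α] [Fintype κ] [DecidableEq κ]
  {G : SimpleGraph α} [DecidableRel G.Adj] {A : Finset α} {f : α → κ}

/-- The colors that a coloring `f` of `A` leaves for the vertex `v`. -/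
def availableColors (G : SimpleGraph α) [DecidableRel G.Adj] (A : Finset α) (f : α → κ) (v : α) :
    Finset κ :=
  ((G.neighborFinset v ∩ A).image f)ᶜ

theorem card_le_card_availableColors_add (v : α) :
    Fintype.card κ ≤ (availableColors G A f v).card + (G.neighborFinset v ∩ A).card := by
  have : ((G.neighborFinset v ∩ A).image f).card ≤ (G.neighborFinset v ∩ A).card :=
    Finset.card_image_le
  rw [availableColors, Finset.card_compl]
  lia

theorem IsColoringOn.colorable_of_availableColors (hf : IsColoringOn G A f) (E : ι → α) (c : ι → κ)
    (hcover : ∀ v w, G.Adj v w → v ∉ A → ∃ i, E i = v)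
    (hc : ∀ i, c i ∈ availableColors G A f (E i)) (hne : ∀ i j, G.Adj (E i) (E j) → c i ≠ c j) :
    G.Colorable (Fintype.card κ) := by
  have havail {i : ι} {w : α} (hw : w ∈ A) (h : G.Adj (E i) w) : c i ≠ f w := by
    have hci := hc i
    simp only [availableColors, Finset.mem_compl, Finset.mem_image, Finset.mem_inter,
      mem_neighborFinset, not_exists, not_and] at hci
    exact Ne.symm (hci w ⟨h, hw⟩)
  have hcolor (v : α) : ∃ k, v ∈ A ∧ k = f v ∨ (∃ i, E i = v ∧ k = c i) ∨ ∀ w, ¬G.Adj v w := by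
    by_cases hw : ∃ w, G.Adj v w ∧ v ∉ A
    · obtain ⟨w, hvw, hv⟩ := hw
      obtain ⟨i, hi⟩ := hcover v w hvw hv
      exact ⟨c i, .inr (.inl ⟨i, hi, rfl⟩)⟩
    · exact ⟨f v, by grind only⟩
  choose g hg using hcolor
  refine (Coloring.mk g fun {v w} hvw => ?_).colorable
  rcases hg v with ⟨hv, hgv⟩ | ⟨i, rfl, hgv⟩ | hv
  · rcases hg w with ⟨hw, hgw⟩ | ⟨j, rfl, hgw⟩ | hw
    · rw [hgv, hgw]
      exact hf hv hw hvw
    · rw [hgv, hgw]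
      exact (havail hv hvw.symm).symm
    · exact absurd hvw.symm (hw v)
  · rcases hg w with ⟨hw, hgw⟩ | ⟨j, rfl, hgw⟩ | hw
    · rw [hgv, hgw]
      exact havail hw hvw
    · rw [hgv, hgw]
      exact hne i j hvw
    · exact absurd hvw.symm (hw _)
  · exact absurd hvw (hv w)

end AvailableColors

section Subcubic

variable {V : Type*} [Fintype V] [DecidableEq V] {G : SimpleGraph V} [DecidableRel G.Adj]
  (hdeg : ∀ v, G.degree v ≤ 3) {S : Finset V} {a b u v w z : V}
include hdeg

theorem card_neighborFinset_sdiff_insert_le_one (hu : G.Adj a u) (hv : G.Adj a v)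
    (huv : u ≠ v) (hvS : v ∈ S) : (G.neighborFinset a \ insert u S).card ≤ 1 := by
  have hcard := Finset.card_pair huv
  have := card_neighborFinset_sdiff_add_card_le (G := G) (a := a) (S := insert u S) (T := {u, v})
    (by simp [hu, hv]) (by simp [Finset.insert_subset_iff, hvS])
  have := hdeg a
  lia

theorem neighborFinset_eq_of_adj (hu : G.Adj a u) (hv : G.Adj a v) (hw : G.Adj a w)
    (huv : u ≠ v) (huw : u ≠ w) (hvw : v ≠ w) : G.neighborFinset a = {u, v, w} := by
  have hcard : ({u, v, w} : Finset V).card = 3 :=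
    Finset.card_eq_three.2 ⟨u, v, w, huv, huw, hvw, rfl⟩
  refine (Finset.eq_of_subset_of_card_le ?_ ?_).symm
  · simp [Finset.insert_subset_iff, hu, hv, hw]
  · simpa [hcard] using hdeg a

theorem card_hangingEdges_le_three (hab : G.Adj a b) (haw : G.Adj a w) (hwb : w ≠ b)
    (hwz : G.Adj w z) (hzS : z ∈ S) (hza : z ≠ a) : (hangingEdges G S a b).card ≤ 3 := by
  let T := G.neighborFinset a \ insert w (insert b S)
  have hsub : G.neighborFinset a \ insert b S ⊆ insert w T := by
    rw [Finset.subset_insert_iff, ← Finset.sdiff_insert]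
  have hsum : (hangingEdges G S a b).card ≤ (G.neighborFinset w \ insert a S).card +
      ∑ x ∈ T, (G.neighborFinset x \ insert a S).card := by
    rw [← Finset.sum_insert (f := fun x => (G.neighborFinset x \ insert a S).card)
      (show w ∉ T by simp [T])]
    exact Finset.card_biUnion_le.trans <|
      (Finset.sum_le_sum fun _ _ => Finset.card_image_le).trans (Finset.sum_le_sum_of_subset hsub)
  have hrest : ∑ x ∈ T, (G.neighborFinset x \ insert a S).card ≤ T.card • 2 := by
    refine Finset.sum_le_card_nsmul _ _ _ fun x hx => ?_
    have hax : G.Adj a x := by simpa using (Finset.mem_sdiff.1 hx).1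
    have := card_neighborFinset_sdiff_insert_lt hax.symm (S := S)
    have := hdeg x
    lia
  have hw := card_neighborFinset_sdiff_insert_le_one hdeg haw.symm hwz hza.symm hzS
  have hT := card_neighborFinset_sdiff_insert_le_one hdeg haw hab hwb (Finset.mem_insert_self b S)
  lia

theorem exists_neighborFinset_subset (hu : G.Adj a u) (hv : G.Adj a v) (huv : u ≠ v) :
    ∃ d, d ≠ u ∧ d ≠ v ∧ G.neighborFinset a ⊆ {u, v, d} := by
  by_cases h : ∃ d, G.Adj a d ∧ d ≠ u ∧ d ≠ v
  · obtain ⟨d, had, hdu, hdv⟩ := h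
    exact ⟨d, hdu, hdv,
      (neighborFinset_eq_of_adj hdeg hu hv had huv hdu.symm hdv.symm).subset⟩
  · refine ⟨a, hu.ne, hv.ne, fun x hx => ?_⟩
    simp only [mem_neighborFinset, Finset.mem_insert, Finset.mem_singleton] at *
    grind only

end Subcubic

section Reduction

variable {V : Type*} [Fintype V] [DecidableEq V] {G : SimpleGraph V} {S : Finset V} {k : ℕ}
  {u v : V}

theorem exists_isColoringOn_of_colorable_of_lt
    (hG : ∀ H < G, (conflictGraph H).Colorable k) (hu : u ∈ S) (huv : G.Adj u v) :
    ∃ f : Sym2 V → Fin k, IsColoringOn (conflictGraph G) Sᶜ.sym2 f := by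
  let H : SimpleGraph V := (G.induce ((Sᶜ : Finset V) : Set V)).spanningCoe
  have hH {x y : V} : H.Adj x y ↔ G.Adj x y ∧ x ∉ S ∧ y ∉ S := by
    simp [H]
  have hlt : H < G := lt_of_le_not_ge (fun x y h => (hH.1 h).1) fun h => (hH.1 (h huv)).2.1 hu
  obtain ⟨f⟩ := hG H hlt
  refine ⟨f, fun e₁ h₁ e₂ h₂ h => f.valid ?_⟩
  obtain ⟨he₁, he₂, h⟩ := h
  obtain ⟨a, b, c, d, rfl, rfl, hac, had, hbc, hbd⟩ | ⟨a, b, c, rfl, rfl, hab, hac, hbc⟩ :=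
    h.exists_eq <;>
  simp only [Finset.mem_sym2_iff, Sym2.mem_iff, forall_eq_or_imp, forall_eq, Finset.mem_compl]
    at h₁ h₂
  · exact conflictGraph_adj_of_adj (hH.2 ⟨he₁, h₁⟩) (hH.2 ⟨he₂, h₂⟩) (hH.2 ⟨hac, h₁.1, h₂.1⟩)
      had hbc hbd
  · exact ⟨hH.2 ⟨hab, h₁⟩, hH.2 ⟨hac, h₂⟩, h.1, .inr ⟨a, b, c, hH.2 ⟨hab, h₁⟩,
      hH.2 ⟨hbc, h₁.2, h₂.2⟩, hH.2 ⟨hac, h₂⟩, by simp, by simp⟩⟩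

variable [DecidableRel (conflictGraph G).Adj]

theorem colorable_conflictGraph_of_list_colorable {ι : Type*}
    (hG : ∀ H < G, (conflictGraph H).Colorable k) (hu : u ∈ S) (huv : G.Adj u v) (E : ι → Sym2 V)
    (hcover : ∀ x y, G.Adj x y → x ∈ S → ∃ i, E i = s(x, y))
    (hlist : ∀ L : ι → Finset (Fin k),
      (∀ i, k ≤ (L i).card + ((conflictGraph G).neighborFinset (E i) ∩ Sᶜ.sym2).card) →
        ∃ c : ι → Fin k, (∀ i, c i ∈ L i) ∧
          ∀ i j, (conflictGraph G).Adj (E i) (E j) → c i ≠ c j) :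
    (conflictGraph G).Colorable k := by
  obtain ⟨f, hf⟩ := exists_isColoringOn_of_colorable_of_lt hG hu huv
  obtain ⟨c, hc, hne⟩ := hlist (fun i => availableColors (conflictGraph G) Sᶜ.sym2 f (E i))
    fun i => by simpa using card_le_card_availableColors_add (G := conflictGraph G) (f := f) (E i)
  have hcover' (e e' : Sym2 V) (h : (conflictGraph G).Adj e e') (he : e ∉ Sᶜ.sym2) :
      ∃ i, E i = e := by
    obtain ⟨x, ⟨y, rfl⟩, hx⟩ : ∃ x ∈ e, x ∈ S := by
      simpa [Finset.mem_sym2_iff] using he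
    exact hcover x y h.1 hx
  simpa using hf.colorable_of_availableColors E c hcover' hc hne

variable [DecidableRel G.Adj] (hdeg : ∀ v, G.degree v ≤ 3) {a b : V}
include hdeg

theorem card_neighborFinset_conflictGraph_inter_le (S : Finset V) (a b : V) :
    ((conflictGraph G).neighborFinset s(a, b) ∩ Sᶜ.sym2).card ≤
      2 * ((G.neighborFinset a \ insert b S).card + (G.neighborFinset b \ insert a S).card) := by
  have hunion := (Finset.card_le_card
    (neighborFinset_conflictGraph_inter_subset (G := G) (S := S) a b)).trans
      (Finset.card_union_le _ _)
  have := card_hangingEdges_le_two_mul hdeg S a b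
  have := card_hangingEdges_le_two_mul hdeg S b a
  lia

theorem card_neighborFinset_conflictGraph_inter_le_of_subset
    (ha : G.neighborFinset a ⊆ insert b S) :
    ((conflictGraph G).neighborFinset s(a, b) ∩ Sᶜ.sym2).card ≤ 4 := by
  by_cases hab : G.Adj a b
  · have := card_neighborFinset_conflictGraph_inter_le hdeg S a b
    have := card_neighborFinset_sdiff_insert_lt hab.symm (S := S)
    have := hdeg b
    rw [Finset.sdiff_eq_empty_iff_subset.2 ha, Finset.card_empty] at *
    lia
  · have : (conflictGraph G).neighborFinset s(a, b) = ∅ := by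
      ext e
      simpa using fun h : (conflictGraph G).Adj s(a, b) e => hab h.1
    simp [this]

theorem card_neighborFinset_conflictGraph_inter_le_three {w z : V}
    (ha : G.neighborFinset a ⊆ insert b S) (hab : G.Adj a b) (hbw : G.Adj b w) (hwa : w ≠ a)
    (hwz : G.Adj w z) (hzS : z ∈ S) (hzb : z ≠ b) :
    ((conflictGraph G).neighborFinset s(a, b) ∩ Sᶜ.sym2).card ≤ 3 := by
  have hempty : hangingEdges G S a b = ∅ := by
    rw [hangingEdges, Finset.sdiff_eq_empty_iff_subset.2 ha, Finset.biUnion_empty]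
  have hsub := neighborFinset_conflictGraph_inter_subset (G := G) (S := S) a b
  rw [hempty, Finset.empty_union] at hsub
  exact (Finset.card_le_card hsub).trans
    (card_hangingEdges_le_three hdeg hab.symm hbw hwa hwz hzS hzb)

end Reduction

section Configurations

variable {V : Type*} [Fintype V] [DecidableEq V] {G : SimpleGraph V} [DecidableRel G.Adj]
  [DecidableRel (conflictGraph G).Adj] (hG : ∀ H < G, (conflictGraph H).Colorable 7)
  (hdeg : ∀ v, G.degree v ≤ 3) {S : Finset V} {a b x y : V}
include hdeg

theorem card_conflicts_diamond_side_le (hab : a ≠ b) (hax : G.Adj a x) (hbx : G.Adj b x)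
    (hay : G.Adj a y) (hby : G.Adj b y) (ha : G.neighborFinset a ⊆ {b, x, y})
    (hbS : b ∈ S) : ((conflictGraph G).neighborFinset s(a, x) ∩ Sᶜ.sym2).card ≤ 3 := by
  have hsub : G.neighborFinset a \ insert x S ⊆ {y} := by
    refine fun z hz => ?_
    obtain ⟨hza, hzS⟩ := Finset.mem_sdiff.1 hz
    have := ha hza
    grind only [= Finset.mem_insert, = Finset.mem_singleton]
  have hy := card_neighborFinset_sdiff_insert_le_one hdeg hay.symm hby.symm hab hbS
  have hx := card_neighborFinset_sdiff_insert_le_one hdeg hax.symm hbx.symm hab hbS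
  have hhang : (hangingEdges G S a x).card ≤ (G.neighborFinset a \ insert x S).card * 1 :=
    card_hangingEdges_le fun z hz => by rwa [Finset.mem_singleton.1 (hsub hz)]
  have hcard := Finset.card_le_card hsub
  rw [Finset.card_singleton] at hcard
  have := card_hangingEdges_le_two_mul hdeg S x a
  have := (Finset.card_le_card
    (neighborFinset_conflictGraph_inter_subset (G := G) (S := S) a x)).trans
      (Finset.card_union_le _ _)
  lia

theorem card_conflicts_diamond_center_le (hab : a ≠ b) (hax : G.Adj a x) (hbx : G.Adj b x)
    (hay : G.Adj a y) (hby : G.Adj b y) (ha : G.neighborFinset a = {b, x, y})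
    (hb : G.neighborFinset b = {a, x, y}) :
    ((conflictGraph G).neighborFinset s(a, b) ∩ ({a, b} : Finset V)ᶜ.sym2).card ≤ 2 := by
  have hsdiff : G.neighborFinset a \ {a, b} = {x, y} ∧ G.neighborFinset b \ {a, b} = {x, y} := by
    have := hax.ne'
    have := hbx.ne'
    have := hay.ne'
    have := hby.ne'
    constructor <;> ext z <;> simp only [ha, hb, Finset.mem_sdiff, Finset.mem_insert,
      Finset.mem_singleton] <;> grind only
  have hswap : hangingEdges G {a, b} b a = hangingEdges G {a, b} a b := by
    simp [hangingEdges, hsdiff]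
  have hhang : (hangingEdges G {a, b} a b).card ≤
      (G.neighborFinset a \ insert b {a, b}).card * 1 := by
    refine card_hangingEdges_le fun z hz => ?_
    rw [Finset.insert_eq_of_mem (by simp), hsdiff.1] at hz
    obtain rfl | rfl : z = x ∨ z = y := by simpa using hz
    · exact card_neighborFinset_sdiff_insert_le_one hdeg hax.symm hbx.symm hab (by simp)
    · exact card_neighborFinset_sdiff_insert_le_one hdeg hay.symm hby.symm hab (by simp)
  have hsub := neighborFinset_conflictGraph_inter_subset (G := G) (S := {a, b}) a b
  rw [hswap, Finset.union_self] at hsub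
  rw [Finset.insert_eq_of_mem (a := b) (by simp), hsdiff.1] at hhang
  have := Finset.card_le_card hsub
  have := Finset.card_le_two (a := x) (b := y)
  lia

include hG

omit [DecidableEq V] [DecidableRel (conflictGraph G).Adj] in
theorem colorable_conflictGraph_of_diamond (hab : G.Adj a b) (hax : G.Adj a x) (hbx : G.Adj b x)
    (hay : G.Adj a y) (hby : G.Adj b y) (hxy : x ≠ y) : (conflictGraph G).Colorable 7 := by
  classical
  have ha := neighborFinset_eq_of_adj hdeg hab hax hay hbx.ne hby.ne hxy
  have hb := neighborFinset_eq_of_adj hdeg hab.symm hbx hby hax.ne hay.ne hxy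
  have hside {u v w z : V} := card_conflicts_diamond_side_le hdeg (S := {a, b}) (a := u) (b := v)
    (x := w) (y := z)
  let E : Fin 5 → Sym2 V := ![s(a, x), s(b, x), s(a, y), s(b, y), s(a, b)]
  refine colorable_conflictGraph_of_list_colorable hG (S := {a, b}) (by simp) hab E ?_
    fun L hL => ?_
  · intro u v huv hu
    obtain rfl | rfl : u = a ∨ u = b := by simpa using hu
    · obtain rfl | rfl | rfl : v = b ∨ v = x ∨ v = y := by
        simpa [ha] using (mem_neighborFinset ..).2 huv
      exacts [⟨4, rfl⟩, ⟨0, rfl⟩, ⟨2, rfl⟩]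
    · obtain rfl | rfl | rfl : v = a ∨ v = x ∨ v = y := by
        simpa [hb] using (mem_neighborFinset ..).2 huv
      exacts [⟨4, Sym2.eq_swap⟩, ⟨1, rfl⟩, ⟨3, rfl⟩]
  · have hconf (i : Fin 5) :
        ((conflictGraph G).neighborFinset (E i) ∩ ({a, b} : Finset V)ᶜ.sym2).card ≤
          ![3, 3, 3, 3, 2] i := by
      fin_cases i
      exacts [hside hab.ne hax hbx hay hby ha.subset (by simp),
        hside hab.ne' hbx hax hby hay hb.subset (by simp),
        hside hab.ne hay hby hax hbx (by simp [ha, Finset.pair_comm]) (by simp),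
        hside hab.ne' hby hay hbx hax (by simp [hb, Finset.pair_comm]) (by simp),
        card_conflicts_diamond_center_le hdeg hab.ne hax hbx hay hby ha hb]
    have hbound : ∀ i : Fin 5, (i : ℕ) + ![3, 3, 3, 3, 2] i < 7 := by decide
    obtain ⟨c, hc, hinj⟩ := exists_injective_of_lt_card (L := L) fun i => by
      have := hL i
      have := hconf i
      have := hbound i
      lia
    exact ⟨c, hc, fun i j hij => hinj.ne fun h => hij.ne (congrArg E h)⟩

theorem colorable_conflictGraph_of_cycle {n : ℕ} [NeZero n] {c d : Fin n → V}
    (hc : ∀ i, G.Adj (c i) (c (i + 1))) (hne : ∀ i, c (i + 1) ≠ c (i - 1))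
    (hd : ∀ i, G.neighborFinset (c i) ⊆ {c (i + 1), c (i - 1), d i})
    (hlist : ∀ A L : Fin n → Finset (Fin 7), (∀ i, 3 ≤ (A i).card) → (∀ i, 3 ≤ (L i).card) →
      (∀ i, 7 ≤ (L i).card +
        ((conflictGraph G).neighborFinset s(c i, d i) ∩ (Finset.univ.image c)ᶜ.sym2).card) →
      ∃ e f : Fin n → Fin 7, (∀ i, e i ∈ A i ∧ f i ∈ L i) ∧
        ∀ i j, ((conflictGraph G).Adj s(c i, c (i + 1)) s(c j, c (j + 1)) → e i ≠ e j) ∧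
          ((conflictGraph G).Adj s(c i, d i) s(c j, d j) → f i ≠ f j) ∧
          ((conflictGraph G).Adj s(c i, c (i + 1)) s(c j, d j) → e i ≠ f j)) :
    (conflictGraph G).Colorable 7 := by
  let S := Finset.univ.image c
  have hS (i : Fin n) : c i ∈ S := Finset.mem_image_of_mem _ (Finset.mem_univ i)
  have hpred (i : Fin n) : G.Adj (c i) (c (i - 1)) := by
    simpa using (hc (i - 1)).symm
  have hside (i : Fin n) :
      ((conflictGraph G).neighborFinset s(c i, c (i + 1)) ∩ Sᶜ.sym2).card ≤ 4 := by
    have := card_neighborFinset_sdiff_insert_le_one hdeg (hc i) (hpred i) (hne i) (hS _)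
    have := card_neighborFinset_sdiff_insert_le_one hdeg (hc i).symm (hc (i + 1))
      (by simpa using (hne (i + 1)).symm) (hS _)
    have := card_neighborFinset_conflictGraph_inter_le hdeg S (c i) (c (i + 1))
    lia
  have hpendant (i : Fin n) :
      ((conflictGraph G).neighborFinset s(c i, d i) ∩ Sᶜ.sym2).card ≤ 4 := by
    refine card_neighborFinset_conflictGraph_inter_le_of_subset hdeg ((hd i).trans ?_)
    simp [Finset.insert_subset_iff, hS]
  refine colorable_conflictGraph_of_list_colorable hG (hS 0) (hc 0)
    (Sum.elim (fun i => s(c i, c (i + 1))) fun i => s(c i, d i)) ?_ fun L hL => ?_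
  · intro x y hxy hx
    obtain ⟨i, -, rfl⟩ := Finset.mem_image.1 hx
    obtain rfl | rfl | rfl : y = c (i + 1) ∨ y = c (i - 1) ∨ y = d i := by
      simpa using hd i ((mem_neighborFinset ..).2 hxy)
    exacts [⟨.inl i, rfl⟩, ⟨.inl (i - 1), by simp [Sym2.eq_swap]⟩, ⟨.inr i, rfl⟩]
  · have hthree {m : ℕ} (hm : 7 ≤ m + 4) : 3 ≤ m := by lia
    obtain ⟨e, f, hmem, hconf⟩ := hlist (fun i => L (.inl i)) (fun i => L (.inr i))
      (fun i => hthree ((hL (.inl i)).trans (Nat.add_le_add_left (hside i) _)))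
      (fun i => hthree ((hL (.inr i)).trans (Nat.add_le_add_left (hpendant i) _)))
      fun i => hL (.inr i)
    refine ⟨Sum.elim e f, by simp [hmem], ?_⟩
    rintro (i | i) (j | j) hij
    exacts [(hconf i j).1 hij, (hconf i j).2.2 hij, ((hconf j i).2.2 hij.symm).symm,
      (hconf i j).2.1 hij]

omit [DecidableEq V] [DecidableRel (conflictGraph G).Adj] in
theorem colorable_conflictGraph_of_triangle
    (hD : ∀ {a b x y}, G.Adj a b → G.Adj a x → G.Adj b x → G.Adj a y → G.Adj b y → x = y)
    {c : Fin 3 → V} (hc : ∀ i, G.Adj (c i) (c (i + 1))) : (conflictGraph G).Colorable 7 := by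
  classical
  have hpred (i : Fin 3) : G.Adj (c i) (c (i - 1)) := by
    simpa using (hc (i - 1)).symm
  have hside (i : Fin 3) : G.Adj (c (i + 1)) (c (i - 1)) := by
    rw [show i - 1 = i + 1 + 1 by lia]
    exact hc (i + 1)
  choose d hd₁ hd₂ hd using fun i =>
    exists_neighborFinset_subset hdeg (hc i) (hpred i) (hside i).ne
  refine colorable_conflictGraph_of_cycle hG hdeg hc (fun i => (hside i).ne) hd
    fun A L hA hL _ => ?_
  obtain ⟨a, b, hmem, hne⟩ := isPrismColorable_of_three_le_card (A := fun i => A (i + 1)) (B := L)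
    (fun i => hA (i + 1)) hL
  have hne' {g : Fin 3 → Fin 7} (hg : ∀ i, g i ≠ g (i + 1)) {i j : Fin 3} (hij : i ≠ j) :
      g i ≠ g j := by
    obtain rfl | rfl : j = i + 1 ∨ i = j + 1 := by lia
    exacts [hg i, (hg j).symm]
  have hopp (i j : Fin 3) (h : (conflictGraph G).Adj s(c i, c (i + 1)) s(c j, d j)) :
      i - 1 = j := by
    by_contra hij
    obtain rfl | rfl : j = i ∨ j = i + 1 := by lia
    · exact hd₂ j (hD (hc j) h.2.1 (adj_of_conflictGraph_adj_of_mem h) (hpred j) (hside j))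
    · rw [Sym2.eq_swap (a := c i)] at h
      have hi := (hpred i).symm
      rw [show i - 1 = i + 1 + 1 by lia] at hi
      exact hd₁ (i + 1) (hD (hc i).symm h.2.1 (adj_of_conflictGraph_adj_of_mem h) (hc (i + 1))
        hi.symm)
  refine ⟨fun i => a (i - 1), b, fun i => ⟨by simpa using (hmem (i - 1)).1, (hmem i).2.1⟩,
    fun i j => ⟨fun h => ?_, fun h => ?_, fun h => ?_⟩⟩
  · exact hne' (fun i => (hne i).1) fun hij => h.ne (by rw [sub_left_inj.1 hij])
  · exact hne' (fun i => (hne i).2) fun hij => h.ne (by rw [hij])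
  · simpa only [hopp i j h] using (hmem j).2.2

omit hG hdeg [DecidableRel (conflictGraph G).Adj] in
theorem adj_of_conflictGraph_adj_of_opposite {u v w z : V} (hT : G.CliqueFree 3) (huv : G.Adj u v)
    (hvw : G.Adj v w) (hu : G.neighborFinset u ⊆ {v, z, x}) (hw : G.neighborFinset w ⊆ {v, z, y})
    (hx : x ≠ v ∧ x ≠ z) (hy : y ≠ v ∧ y ≠ z) (h : (conflictGraph G).Adj s(u, x) s(w, y)) :
    G.Adj x y := by
  obtain ⟨-, -, -, -, -, hxy, huw | huy | hxw | hxy'⟩ :=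
    (conflictGraph_adj_iff_of_cliqueFree_three hT).1 h
  · exact absurd huw (not_adj_of_cliqueFree_three hT huv hvw)
  · have := hu ((mem_neighborFinset ..).2 huy)
    simp_all
  · have := hw ((mem_neighborFinset ..).2 hxw.symm)
    simp_all
  · exact hxy'

omit hG in
theorem card_conflicts_opposite_pendant_le {u v w z : V} (hT : G.CliqueFree 3) (huv : G.Adj u v)
    (hvw : G.Adj v w) (hu : G.neighborFinset u ⊆ {v, z, x}) (hw : G.neighborFinset w ⊆ {v, z, y})
    (hx : x ≠ v ∧ x ≠ z) (hy : y ≠ v ∧ y ≠ z) (hS : ({v, z, w} : Finset V) ⊆ S)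
    (h : (conflictGraph G).Adj s(u, x) s(w, y)) :
    ((conflictGraph G).neighborFinset s(u, x) ∩ Sᶜ.sym2).card ≤ 3 := by
  have hxy := adj_of_conflictGraph_adj_of_opposite hT huv hvw hu hw hx hy h
  obtain ⟨hux, hwy, -, huy, hxw, -⟩ := (conflictGraph_adj_iff_of_cliqueFree_three hT).1 h
  simp only [Finset.insert_subset_iff, Finset.singleton_subset_iff] at hS
  refine card_neighborFinset_conflictGraph_inter_le_three hdeg (hu.trans ?_) hux hxy huy.symm
    hwy.symm hS.2.2 hxw.symm
  simp [Finset.insert_subset_iff, hS]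

omit [DecidableEq V] [DecidableRel (conflictGraph G).Adj] in
theorem colorable_conflictGraph_of_four_cycle (hT : G.CliqueFree 3) {c : Fin 4 → V}
    (hinj : Function.Injective c) (hc : ∀ i, G.Adj (c i) (c (i + 1))) :
    (conflictGraph G).Colorable 7 := by
  classical
  have hpred (i : Fin 4) : G.Adj (c i) (c (i - 1)) := by
    simpa using (hc (i - 1)).symm
  have hne (i : Fin 4) : c (i + 1) ≠ c (i - 1) := hinj.ne (by lia)
  choose d hd₁ hd₂ hd using fun i => exists_neighborFinset_subset hdeg (hc i) (hpred i) (hne i)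
  refine colorable_conflictGraph_of_cycle hG hdeg hc hne hd fun A L hA hL hL' => ?_
  have hfour {i j : Fin 4} (hij : j = i + 2) (h : (conflictGraph G).Adj s(c i, d i) s(c j, d j)) :
      4 ≤ (L i).card := by
    have hj := hd j
    have hj' : G.Adj (c (i + 1)) (c j) ∧ d j ≠ c (i + 1) ∧ d j ≠ c (i - 1) := by
      rw [show i + 1 = j - 1 by lia, show i - 1 = j + 1 by lia]
      exact ⟨(hpred j).symm, hd₂ j, hd₁ j⟩
    rw [Finset.insert_comm, show j - 1 = i + 1 by lia, show j + 1 = i - 1 by lia] at hj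
    have := card_conflicts_opposite_pendant_le hdeg (S := Finset.univ.image c) hT (hc i) hj'.1
      (hd i) hj ⟨hd₁ i, hd₂ i⟩ hj'.2 (by simp [Finset.insert_subset_iff]) h
    have := hL' i
    lia
  obtain ⟨f, e, hf, he⟩ := isPendantCycleColorable_of_three_le_card hL hA
  refine ⟨e, f, fun i => ⟨(he i).1, (hf i).1⟩, fun i j => ⟨fun h => ?_, fun h => ?_, fun h => ?_⟩⟩
  · obtain ⟨-, -, h₁, h₂, h₃, -⟩ := (conflictGraph_adj_iff_of_cliqueFree_three hT).1 h
    have := ne_of_apply_ne c h₁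
    have := ne_of_apply_ne c h₂
    have := ne_of_apply_ne c h₃
    obtain rfl : j = i + 2 := by lia
    exact (he i).2.1
  · have hij : i ≠ j := fun hij => h.ne (by rw [hij])
    obtain rfl | rfl | hij : j = i + 1 ∨ i = j + 1 ∨ j = i + 2 := by lia
    · exact (hf i).2.1
    · exact (hf j).2.1.symm
    · have := (hf i).2.2 (hfour hij h)
      rw [← hij] at this
      exact this (hfour (by lia) h.symm)
  · obtain ⟨-, -, h₁, -, h₂, -⟩ := (conflictGraph_adj_iff_of_cliqueFree_three hT).1 h
    have := ne_of_apply_ne c h₁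
    have := ne_of_apply_ne c h₂
    obtain rfl | rfl : j = i + 2 ∨ j = i + 3 := by lia
    exacts [(he i).2.2.1, (he i).2.2.2]

end Configurations

section Main

variable {V : Type*}

theorem exists_injective_of_not_cycleGraph_four_free {G : SimpleGraph V}
    (hC : ¬(cycleGraph 4).Free G) :
    ∃ c : Fin 4 → V, Function.Injective c ∧ ∀ i, G.Adj (c i) (c (i + 1)) := by
  obtain ⟨φ⟩ := not_not.1 hC
  exact ⟨φ, φ.injective, fun i => φ.toHom.map_adj (by simp [cycleGraph_adj])⟩

theorem colorable_conflictGraph_of_forall_lt [Fintype V] (G : SimpleGraph V) [DecidableRel G.Adj]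
    (hG : ∀ H < G, (conflictGraph H).Colorable 7) (hdeg : ∀ v, G.degree v ≤ 3) :
    (conflictGraph G).Colorable 7 := by
  classical
  by_cases hT : G.CliqueFree 3
  · by_cases hC : (cycleGraph 4).Free G
    · exact colorable_conflictGraph_of_cliqueFree_three_of_cycleGraph_four_free hT hC hdeg
    · obtain ⟨c, hinj, hc⟩ := exists_injective_of_not_cycleGraph_four_free hC
      exact colorable_conflictGraph_of_four_cycle hG hdeg hT hinj hc
  · let φ := topEmbeddingOfNotCliqueFree hT
    by_cases hD : ∃ a b x y, G.Adj a b ∧ G.Adj a x ∧ G.Adj b x ∧ G.Adj a y ∧ G.Adj b y ∧ x ≠ y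
    · obtain ⟨a, b, x, y, hab, hax, hbx, hay, hby, hxy⟩ := hD
      exact colorable_conflictGraph_of_diamond hG hdeg hab hax hbx hay hby hxy
    · push Not at hD
      exact colorable_conflictGraph_of_triangle hG hdeg (fun {a b x y} => hD a b x y)
        (c := φ) fun i => φ.map_adj_iff.2 (by simp)

theorem colorable_conflictGraph_of_degree_le_three [Fintype V] (G : SimpleGraph V)
    [DecidableRel G.Adj] (hdeg : ∀ v, G.degree v ≤ 3) : (conflictGraph G).Colorable 7 := by
  revert hdeg ‹DecidableRel G.Adj›
  induction G using WellFoundedLT.induction with | _ G ih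
  intro _ hdeg
  classical
  exact colorable_conflictGraph_of_forall_lt G
    (fun H hH => ih H hH fun v => (degree_le_of_le hH.le).trans (hdeg v)) hdeg

end Main

/-- For every subcubic graph `G`, `χ'_inj(G) ≤ 7`. -/
theorem injChromIndex_le_seven_of_subcubic {V : Type*} [Fintype V] (G : SimpleGraph V)
    [DecidableRel G.Adj] (hG : ∀ v : V, G.degree v ≤ 3) :
    injChromIndex G ≤ 7 :=
  injChromIndex_le_of_colorable_conflictGraph (colorable_conflictGraph_of_degree_le_three G hG)
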